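/- arXiv:math/0703029 — 3 statements merged into one kernel-verified Lean document; each statement's English description precedes it below -/
import Mathlib

section
/- Let d ≥ 5, let Q be a non-degenerate d-dimensional quadratic form of block-type, let a < b be real numbers and M ∈ ℝ^d. Then Δ(r,M) = O(1) as r → ∞; that is, there exist constants C > 0 and r₁ > 0 such that Δ(r,M) ≤ C for all r ≥ r₁. -/
/-! The volume of `H = Hset Q a b M r` is at least a constant times `r ^ (d - 2)` and the number `n` of
its lattice points is at most a constant times `r ^ (d - 2)`; since `Δ ≤ n / vol H + 1`, this gives
the bound.

*Volume.* Let `p`, `m` be orthogonal with values `1`, `-1` under the form, so that `p + m` is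
light-like. Through every point of a ball of radius comparable to `r` around a point `M + r σ (p + m)`
on the light cone, the segment of length comparable to `r` in direction `p` crosses the shell and
stays inside it for a time of order `1 / r`. Averaging over the ball gives `volume_bound`.

*Lattice points.* With smooth cut-offs to the cube of side `N ≈ r`, Fejér smoothing (`fejer_sum`)
bounds `n` by the mean over a fixed interval `|τ| ≤ T` of `|θ(τ)|`, where `θ` is the theta sum of
`Q[x - M]`. Weyl differencing (`weyl`, `expsum`) bounds `|θ(τ)|²` by `N ^ d` times a weighted
number of points of the `d`-dimensional lattice `Λ_τ = {(u / N, N (τ P u - n))}` near the origin. Here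
`P` is `Q / π` with the sign of the negative block reversed: the kernels only depend on the distance
of each `(τ Q u)_i / π` to the integers, which ignores signs, so `P` may be taken positive definite.

The symplectic pairing of two short lattice vectors is an integer smaller than `1`, so it vanishes;
hence the short vectors span an isotropic space, of dimension at most `d`. If the shortest vector has
norm more than `δ`, there are thus `O(δ ^ (-d))` short vectors (`packing`), and
`|θ(τ)| ≪ (N / δ) ^ (d / 2)` (`theta_bound`).

The times with a vector of norm at most `δ` have measure `O(δ²)` (`bad_volume`): the same integrality
argument at two different times shows that `(τ - τ') ⟨P u, u'⟩` is tiny, so well separated bad times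
in a short window give vectors `u` that are almost `P`-orthogonal, and there are at most `d` of
those. This is where definiteness of `P` is used.

As `δ` runs through `2 ^ (-j)` down to about `1 / N`, the contributions `(N / δ) ^ (d / 2) δ²` grow
geometrically when `d ≥ 5`, so the last one, `N ^ (d - 2)`, dominates (`theta_integral`). -/

open MeasureTheory Filter

/-- The quadratic form `Q[x] = ⟨Qx, x⟩` associated to a matrix `Q`. -/
noncomputable def quadForm {d : ℕ} (Q : Matrix (Fin d) (Fin d) ℝ) (x : Fin d → ℝ) : ℝ :=
  ∑ i, Q.mulVec x i * x i

/-- `Q` is of block-type: `Q = diag(Q⁺, −Q⁻)` with `Q⁺, Q⁻` positive definite. -/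
def IsBlockType {d : ℕ} (Q : Matrix (Fin d) (Fin d) ℝ) : Prop :=
  ∃ (d₁ d₂ : ℕ) (h : d₁ + d₂ = d) (Qp : Matrix (Fin d₁) (Fin d₁) ℝ)
    (Qm : Matrix (Fin d₂) (Fin d₂) ℝ),
    1 ≤ d₁ ∧ 1 ≤ d₂ ∧ Qp.PosDef ∧ Qm.PosDef ∧
    Q = (Matrix.fromBlocks Qp 0 0 (-Qm)).submatrix
      (fun i => finSumFinEquiv.symm (Fin.cast h.symm i))
      (fun i => finSumFinEquiv.symm (Fin.cast h.symm i))

/-- Casting an integer vector to a real vector. -/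
def intVec {d : ℕ} (m : Fin d → ℤ) : Fin d → ℝ := fun i => (m i : ℝ)

/-- Number of lattice points in a set `B ⊆ ℝ^d`. -/
noncomputable def latticeCount {d : ℕ} (B : Set (Fin d → ℝ)) : ℕ :=
  (B ∩ Set.range intVec).ncard

/-- The hyperbolic shell intersected with the cube:
`H_{r,M} = {x : a ≤ Q[x−M] ≤ b} ∩ {x : |x|_∞ ≤ r}` (the sup-norm is the norm of `Fin d → ℝ`). -/
noncomputable def Hset {d : ℕ} (Q : Matrix (Fin d) (Fin d) ℝ) (a b : ℝ) (M : Fin d → ℝ)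
    (r : ℝ) : Set (Fin d → ℝ) :=
  {x | (a ≤ quadForm Q (x - M) ∧ quadForm Q (x - M) ≤ b) ∧ ‖x‖ ≤ r}

/-- Relative lattice point remainder `Δ(r,M)`. -/
noncomputable def DeltaRel {d : ℕ} (Q : Matrix (Fin d) (Fin d) ℝ) (a b : ℝ) (M : Fin d → ℝ)
    (r : ℝ) : ℝ :=
  |((latticeCount (Hset Q a b M r) : ℝ) - (volume (Hset Q a b M r)).toReal) /
    (volume (Hset Q a b M r)).toReal|

/-! ### Symplectic integrality and almost orthogonal vectors -/

/-- Distance from a real number to the nearest integer. -/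
noncomputable def nrst (x : ℝ) : ℝ := |x - round x|

/-- A symmetric positive definite matrix, with explicit lower and upper bounds for its bilinear
form in terms of the sup norm. -/
structure GoodForm {d : ℕ} (P : Matrix (Fin d) (Fin d) ℝ) (c0 C0 : ℝ) : Prop where
  c0_pos : 0 < c0
  C0_pos : 0 < C0
  symm : ∀ x y : Fin d → ℝ, P.mulVec x ⬝ᵥ y = P.mulVec y ⬝ᵥ x
  lower : ∀ x : Fin d → ℝ, c0 * ‖x‖ ^ 2 ≤ P.mulVec x ⬝ᵥ x
  upper : ∀ x y : Fin d → ℝ, |P.mulVec x ⬝ᵥ y| ≤ C0 * ‖x‖ * ‖y‖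

/-- In `ℝ^d` there are no `d + 1` vectors, bounded below in norm, that are almost orthogonal for a
positive definite form: their Gram matrix is diagonally dominant, whereas a linear dependence puts
its coefficients in the kernel. -/
lemma almost_orth {d : ℕ} {P : Matrix (Fin d) (Fin d) ℝ} {c0 C0 : ℝ} (hP : GoodForm P c0 C0)
    (v : Fin (d + 1) → Fin d → ℝ) {q ε : ℝ} (hq : 0 < q)
    (hv : ∀ j, q ≤ ‖v j‖) (hoff : ∀ i j, i ≠ j → |P.mulVec (v i) ⬝ᵥ v j| ≤ ε * q ^ 2)
    (hε : d * ε < c0) : False := by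
  have hnl : ¬ LinearIndependent ℝ v := by
    intro h
    have := h.fintype_card_le_finrank
    simp at this
  obtain ⟨g, hg, i0, hi0⟩ := Fintype.not_linearIndependent_iff.1 hnl
  obtain ⟨j, hj⟩ := Finite.exists_max (fun i => |g i|)
  have hgj : 0 < |g j| := lt_of_lt_of_le (abs_pos.2 hi0) (hj i0)
  have h0 : ∑ i, g i * (P.mulVec (v i) ⬝ᵥ v j) = 0 := by
    have : P.mulVec (∑ i, g i • v i) ⬝ᵥ v j = 0 := by rw [hg]; simp
    rw [Matrix.mulVec_sum, sum_dotProduct] at this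
    simpa [Matrix.mulVec_smul] using this
  rw [← Finset.add_sum_erase _ _ (Finset.mem_univ j)] at h0
  have h1 : |∑ i ∈ Finset.univ.erase j, g i * (P.mulVec (v i) ⬝ᵥ v j)|
      ≤ ∑ i ∈ (Finset.univ : Finset (Fin (d+1))).erase j, |g j| * (ε * q ^ 2) := by
    refine (Finset.abs_sum_le_sum_abs _ _).trans (Finset.sum_le_sum fun i hi => ?_)
    rw [abs_mul]
    exact mul_le_mul (hj i) (hoff i j (Finset.ne_of_mem_erase hi)) (abs_nonneg _) (abs_nonneg _)
  have hcard : ((Finset.univ : Finset (Fin (d+1))).erase j).card = d := by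
    simp [Finset.card_erase_of_mem]
  rw [Finset.sum_const, hcard, nsmul_eq_mul] at h1
  have h2 : |g j * (P.mulVec (v j) ⬝ᵥ v j)| ≤ d * (|g j| * (ε * q ^ 2)) := by
    have : g j * (P.mulVec (v j) ⬝ᵥ v j)
      = -∑ i ∈ Finset.univ.erase j, g i * (P.mulVec (v i) ⬝ᵥ v j) := by linarith
    rw [this, abs_neg]; exact h1
  have h3 : c0 * q ^ 2 ≤ P.mulVec (v j) ⬝ᵥ v j := by
    refine le_trans ?_ (hP.lower (v j))
    have := hP.c0_pos
    have := hv j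
    gcongr
  rw [abs_mul] at h2
  have h4 := mul_le_mul_of_nonneg_left (h3.trans (le_abs_self _)) hgj.le
  have h5 : |g j| * q ^ 2 * (d * ε) < |g j| * q ^ 2 * c0 :=
    mul_lt_mul_of_pos_left hε (by positivity)
  nlinarith

/-- A set without `k + 1` points at pairwise distance more than `L` is covered by `k` intervals of
length `2L`. -/
lemma cover_of_no_separated (L : ℝ) (k : ℕ) (B : Set ℝ)
    (h : ∀ f : Fin (k + 1) → ℝ, (∀ i, f i ∈ B) → ∃ i j, i ≠ j ∧ |f i - f j| ≤ L) :
    volume B ≤ k * ENNReal.ofReal (2 * L) := by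
  induction k generalizing B with
  | zero =>
    have : B = ∅ := by
      by_contra hne
      obtain ⟨x, hx⟩ := Set.nonempty_iff_ne_empty.2 hne
      obtain ⟨i, j, hij, -⟩ := h (fun _ => x) (fun _ => hx)
      exact hij (Subsingleton.elim (α := Fin 1) i j)
    simp [this]
  | succ k ih =>
    rcases Set.eq_empty_or_nonempty B with rfl | ⟨x, hx⟩
    · simp
    -- Outside the interval of radius `L` around `x ∈ B`, no `k + 1` points are separated, for `x`
    -- could be added to them.
    have h1 := ih (B \ Metric.closedBall x L) (by
      intro f hf
      obtain ⟨i, j, hij, hl⟩ := h (Fin.cons x f : Fin (k + 1 + 1) → ℝ) (by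
        intro i
        refine Fin.cases ?_ (fun i => ?_) i
        · simpa using hx
        · simpa using (hf i).1)
      have hfar : ∀ i, ¬ |f i - x| ≤ L := fun i hi => (hf i).2 (by
        simpa [Metric.mem_closedBall, Real.dist_eq] using hi)
      induction i using Fin.cases with
      | zero =>
        induction j using Fin.cases with
        | zero => exact absurd rfl hij
        | succ j =>
          simp only [Fin.cons_zero, Fin.cons_succ] at hl
          rw [abs_sub_comm] at hl
          exact absurd hl (hfar j)
      | succ i =>
        induction j using Fin.cases with
        | zero =>
          simp only [Fin.cons_zero, Fin.cons_succ] at hl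
          exact absurd hl (hfar i)
        | succ j =>
          simp only [Fin.cons_succ] at hl
          exact ⟨i, j, fun h => hij (by rw [h]), hl⟩)
    calc volume B ≤ volume (B \ Metric.closedBall x L ∪ Metric.closedBall x L) := by
          apply measure_mono
          intro y hy
          by_cases hy' : y ∈ Metric.closedBall x L
          · exact Or.inr hy'
          · exact Or.inl ⟨hy, hy'⟩
      _ ≤ _ := measure_union_le _ _
      _ ≤ k * ENNReal.ofReal (2 * L) + ENNReal.ofReal (2 * L) := by
          gcongr
          rw [Real.volume_closedBall]
      _ = _ := by push_cast; ring

lemma round_pairing_le {d : ℕ} {P : Matrix (Fin d) (Fin d) ℝ} {e X : ℝ}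
    (σ : ℝ) (a b : Fin d → ℤ) (ha : ∀ i, nrst (σ * P.mulVec (intVec a) i) ≤ e)
    (hb : ‖intVec b‖ ≤ X) (he : 0 ≤ e) :
    |∑ i, (σ * P.mulVec (intVec a) i - round (σ * P.mulVec (intVec a) i)) * (b i : ℝ)|
        ≤ d * (e * X) := by
  refine (Finset.abs_sum_le_sum_abs _ _).trans ?_
  have : (d : ℝ) * (e * X) = ∑ _i : Fin d, e * X := by simp
  rw [this]
  refine Finset.sum_le_sum fun i _ => ?_
  rw [abs_mul]
  refine mul_le_mul (ha i) ?_ (abs_nonneg _) he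
  exact (norm_le_pi_norm (intVec b) i).trans hb

/-- For approximations `τ P u ≈ n`, `τ' P u' ≈ n'` the symplectic pairing `⟨n,u'⟩ - ⟨n',u⟩` is an
integer, so it vanishes as soon as it is less than `1` in absolute value. -/
lemma pairing_eq {d : ℕ} {P : Matrix (Fin d) (Fin d) ℝ} {c0 C0 : ℝ} (hP : GoodForm P c0 C0)
    {τ τ' e X : ℝ} {u u' : Fin d → ℤ}
    (hu : ∀ i, nrst (τ * P.mulVec (intVec u) i) ≤ e)
    (hu' : ∀ i, nrst (τ' * P.mulVec (intVec u') i) ≤ e)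
    (hX : ‖intVec u‖ ≤ X) (hX' : ‖intVec u'‖ ≤ X) (he : 0 ≤ e)
    (hsmall : |τ - τ'| * (C0 * X * X) + 2 * (d * (e * X)) < 1) :
    (τ - τ') * (P.mulVec (intVec u) ⬝ᵥ intVec u') =
      ∑ i, (τ * P.mulVec (intVec u) i - round (τ * P.mulVec (intVec u) i)) * (u' i : ℝ)
      - ∑ i, (τ' * P.mulVec (intVec u') i - round (τ' * P.mulVec (intVec u') i)) * (u i : ℝ)
      := by
  set n : Fin d → ℤ := fun i => round (τ * P.mulVec (intVec u) i)
  set n' : Fin d → ℤ := fun i => round (τ' * P.mulVec (intVec u') i)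
  set z : ℤ := ∑ i, (n i * u' i - n' i * u i) with hz
  have hX0 : 0 ≤ X := (norm_nonneg _).trans hX
  have k1 := round_pairing_le τ u u' hu hX' he
  have k2 := round_pairing_le τ' u' u hu' hX he
  have hid : (τ - τ') * (P.mulVec (intVec u) ⬝ᵥ intVec u') =
      ∑ i, (τ * P.mulVec (intVec u) i - round (τ * P.mulVec (intVec u) i)) * (u' i : ℝ)
      - ∑ i, (τ' * P.mulVec (intVec u') i - round (τ' * P.mulVec (intVec u') i)) * (u i : ℝ)
      + z := by
    have h1 : (τ - τ') * (P.mulVec (intVec u) ⬝ᵥ intVec u') =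
      τ * (P.mulVec (intVec u) ⬝ᵥ intVec u') - τ' * (P.mulVec (intVec u') ⬝ᵥ intVec u) := by
      rw [hP.symm (intVec u') (intVec u)]; ring
    rw [h1, hz]
    simp only [dotProduct, Finset.mul_sum]
    push_cast
    rw [← Finset.sum_sub_distrib, ← Finset.sum_sub_distrib, ← Finset.sum_add_distrib]
    refine Finset.sum_congr rfl fun i _ => ?_
    simp only [intVec, n, n']
    ring
  have hup := hP.upper (intVec u) (intVec u')
  have hup' : |P.mulVec (intVec u) ⬝ᵥ intVec u'| ≤ C0 * X * X := by
    refine hup.trans ?_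
    have := hP.C0_pos
    gcongr
  have h2 : |(τ - τ') * (P.mulVec (intVec u) ⬝ᵥ intVec u')| ≤ |τ - τ'| * (C0 * X * X) := by
    rw [abs_mul]; gcongr
  have hzlt : |(z : ℝ)| < 1 := by
    rw [abs_le] at k1 k2 h2
    rw [abs_lt]
    constructor <;> linarith
  have hz0 : z = 0 := by
    rw [← Int.abs_lt_one_iff]
    exact_mod_cast hzlt
  rw [hid, hz0]
  simp

lemma pairing_small {d : ℕ} {P : Matrix (Fin d) (Fin d) ℝ} {c0 C0 : ℝ} (hP : GoodForm P c0 C0)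
    {τ τ' e X : ℝ} {u u' : Fin d → ℤ}
    (hu : ∀ i, nrst (τ * P.mulVec (intVec u) i) ≤ e)
    (hu' : ∀ i, nrst (τ' * P.mulVec (intVec u') i) ≤ e)
    (hX : ‖intVec u‖ ≤ X) (hX' : ‖intVec u'‖ ≤ X) (he : 0 ≤ e)
    (hsmall : |τ - τ'| * (C0 * X * X) + 2 * (d * (e * X)) < 1) :
    |τ - τ'| * |P.mulVec (intVec u) ⬝ᵥ intVec u'| ≤ 2 * (d * (e * X)) := by
  have k1 := round_pairing_le τ u u' hu hX' he
  have k2 := round_pairing_le τ' u' u hu' hX he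
  rw [← abs_mul, pairing_eq hP hu hu' hX hX' he hsmall]
  rw [abs_le] at k1 k2 ⊢
  constructor <;> linarith

/-- The times `τ` in an interval of length `w` at which some integer vector of size between `q` and
`2q` is mapped by `τP` into the `e`-neighbourhood of the integer lattice: if there were more than
`d` well separated such times, the vectors would be almost orthogonal. -/
lemma window_volume {d : ℕ} {P : Matrix (Fin d) (Fin d) ℝ} {c0 C0 : ℝ} (hP : GoodForm P c0 C0)
    {s w q e : ℝ} (hq : 0 < q) (he : 0 < e)
    (hsmall : w * (C0 * (2 * q) * (2 * q)) + 2 * (d * (e * (2 * q))) < 1) (hd : 0 < d) :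
    volume {τ : ℝ | τ ∈ Set.Icc s (s + w) ∧ ∃ u : Fin d → ℤ, q ≤ ‖intVec u‖ ∧ ‖intVec u‖ ≤ 2 * q ∧
      ∀ i, nrst (τ * P.mulVec (intVec u) i) ≤ e} ≤
      d * ENNReal.ofReal (2 * (4 * d * (d + 1) * e / (c0 * q))) := by
  apply cover_of_no_separated
  intro f hf
  by_contra hcon
  push Not at hcon
  choose hfI u hu1 hu2 hu3 using hf
  have hc0 := hP.c0_pos
  have hC0 := hP.C0_pos
  have hd' : (0 : ℝ) < d := by exact_mod_cast hd
  refine almost_orth hP (fun i => intVec (u i)) (ε := c0 / (d + 1)) hq hu1 ?_ ?_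
  · intro i j hij
    have hw : |f i - f j| ≤ w := by
      have h1 := hfI i
      have h2 := hfI j
      simp only [Set.mem_Icc] at h1 h2
      rw [abs_le]; constructor <;> linarith
    have hp := pairing_small hP (hu3 i) (hu3 j) (hu2 i) (hu2 j) he.le (by
      refine lt_of_le_of_lt ?_ hsmall
      gcongr)
    have hfar := hcon i j hij
    have hL : 0 < 4 * d * (d + 1) * e / (c0 * q) := by positivity
    have h3 : 4 * d * (d + 1) * e / (c0 * q) * |P.mulVec (intVec (u i)) ⬝ᵥ intVec (u j)| ≤
       2 * (d * (e * (2 * q))) := le_trans (by gcongr) hp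
    rw [mul_comm, ← le_div_iff₀ hL] at h3
    refine h3.trans (le_of_eq ?_)
    field_simp
    ring
  · rw [mul_div_assoc', div_lt_iff₀ (by positivity)]
    nlinarith

/-! ### Measure of the bad times -/

/-- The bound of `window_volume`, summed over the `O(q²)` windows of length about `1 / q²` that cover
`[-T, T]`. -/
lemma shell_volume {d : ℕ} {P : Matrix (Fin d) (Fin d) ℝ} {c0 C0 : ℝ} (hP : GoodForm P c0 C0)
    (hd : 0 < d) {T : ℝ} (hT : 0 < T) :
    ∃ c > 0, ∃ C > 0, ∀ q e : ℝ, 1 ≤ q → 0 < e → e * q ≤ c →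
    volume {τ : ℝ | τ ∈ Set.Icc (-T) T ∧ ∃ u : Fin d → ℤ, q ≤ ‖intVec u‖ ∧ ‖intVec u‖ ≤ 2 * q ∧
      ∀ i, nrst (τ * P.mulVec (intVec u) i) ≤ e} ≤ ENNReal.ofReal (C * (q * e)) := by
  have hc0 := hP.c0_pos
  have hC0 := hP.C0_pos
  have hd' : (0 : ℝ) < d := by exact_mod_cast hd
  set c1 : ℝ := 1 / (16 * C0) with hc1
  have hc1p : 0 < c1 := by positivity
  refine ⟨1 / (16 * d), by positivity, (2 * T / c1 + 1) * (d * (2 * (4 * d * (d + 1) / c0))),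
    by positivity, ?_⟩
  intro q e hq he heq
  have hq0 : 0 < q := by linarith
  set w : ℝ := c1 / q ^ 2 with hw
  have hwp : 0 < w := by positivity
  set K : ℕ := ⌊2 * T / w⌋₊ + 1
  have hsmall : w * (C0 * (2 * q) * (2 * q)) + 2 * (d * (e * (2 * q))) < 1 := by
    have h1 : w * (C0 * (2 * q) * (2 * q)) = 1 / 4 := by
      rw [hw, hc1]; field_simp; norm_num
    have h2 : 2 * (d * (e * (2 * q))) ≤ 1 / 4 := by
      have := mul_le_mul_of_nonneg_left heq (by positivity : (0:ℝ) ≤ 4 * d)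
      have h3 : 4 * (d : ℝ) * (1 / (16 * d)) = 1 / 4 := by field_simp; norm_num
      linarith
    linarith
  have hsub : {τ : ℝ | τ ∈ Set.Icc (-T) T ∧ ∃ u : Fin d → ℤ, q ≤ ‖intVec u‖ ∧ ‖intVec u‖ ≤ 2 * q ∧
      ∀ i, nrst (τ * P.mulVec (intVec u) i) ≤ e} ⊆
      ⋃ k ∈ Finset.range K, {τ : ℝ | τ ∈ Set.Icc (-T + k * w) (-T + k * w + w) ∧
        ∃ u : Fin d → ℤ, q ≤ ‖intVec u‖ ∧ ‖intVec u‖ ≤ 2 * q ∧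
        ∀ i, nrst (τ * P.mulVec (intVec u) i) ≤ e} := by
    rintro τ ⟨⟨h1, h2⟩, hu⟩
    simp only [Set.mem_iUnion, Finset.mem_range, exists_prop]
    refine ⟨⌊(τ + T) / w⌋₊, ?_, ⟨?_, ?_⟩, hu⟩
    · refine Nat.lt_succ_of_le (Nat.floor_le_floor ?_)
      gcongr; linarith
    · have := Nat.floor_le (a := (τ + T) / w) (div_nonneg (by linarith) hwp.le)
      rw [le_div_iff₀ hwp] at this
      linarith
    · have := Nat.lt_floor_add_one ((τ + T) / w)
      rw [div_lt_iff₀ hwp] at this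
      linarith
  refine (measure_mono hsub).trans ((measure_biUnion_finset_le _ _).trans ?_)
  refine (Finset.sum_le_sum fun k _ => window_volume hP hq0 he hsmall hd).trans ?_
  rw [Finset.sum_const, Finset.card_range, nsmul_eq_mul]
  have hK : (K : ℝ) ≤ (2 * T / c1 + 1) * q ^ 2 := by
    have h1 : (K : ℝ) ≤ 2 * T / w + 1 := by
      simp only [K]; push_cast
      have := Nat.floor_le (a := 2 * T / w) (by positivity)
      linarith
    have h2 : 2 * T / w = 2 * T / c1 * q ^ 2 := by rw [hw]; field_simp
    have h3 : 1 ≤ q ^ 2 := one_le_pow₀ hq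
    rw [h2] at h1
    linarith
  rw [← ENNReal.ofReal_natCast, ← ENNReal.ofReal_natCast, ← ENNReal.ofReal_mul (by positivity),
    ← ENNReal.ofReal_mul (by positivity)]
  apply ENNReal.ofReal_le_ofReal
  calc (K : ℝ) * (d * (2 * (4 * d * (d + 1) * e / (c0 * q)))) ≤
      ((2 * T / c1 + 1) * q ^ 2) * (d * (2 * (4 * d * (d + 1) * e / (c0 * q)))) := by gcongr
    _ = _ := by field_simp

/-- The times `τ ∈ [-T, T]` for which the lattice `{(u/N, N(τPu - n))}` has a nonzero vector of
sup norm at most `δ`. -/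
def Bad {d : ℕ} (P : Matrix (Fin d) (Fin d) ℝ) (T N δ : ℝ) : Set ℝ :=
  {τ : ℝ | τ ∈ Set.Icc (-T) T ∧ ∃ u : Fin d → ℤ, u ≠ 0 ∧ ‖intVec u‖ ≤ δ * N ∧
      ∀ i, nrst (τ * P.mulVec (intVec u) i) ≤ δ / N}

lemma one_le_norm_intVec {d : ℕ} {u : Fin d → ℤ} (hu : u ≠ 0) : 1 ≤ ‖intVec u‖ := by
  obtain ⟨i, hi⟩ := Function.ne_iff.1 hu
  refine le_trans ?_ (norm_le_pi_norm (intVec u) i)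
  have : 1 ≤ |u i| := Int.one_le_abs (by simpa using hi)
  simp only [intVec, Real.norm_eq_abs]
  exact_mod_cast this

lemma bad_empty {d : ℕ} (P : Matrix (Fin d) (Fin d) ℝ) {T N δ : ℝ} (h : δ * N < 1) :
    Bad P T N δ = ∅ := by
  rw [Set.eq_empty_iff_forall_notMem]
  rintro τ ⟨-, u, hu0, hu, -⟩
  linarith [one_le_norm_intVec hu0]

/-- The measure of the set of times with a lattice vector of norm at most `δ` is `O(δ²)`,
by summing over the dyadic sizes of the vector `u`. -/
lemma bad_volume {d : ℕ} {P : Matrix (Fin d) (Fin d) ℝ} {c0 C0 : ℝ} (hP : GoodForm P c0 C0)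
    (hd : 0 < d) {T : ℝ} (hT : 0 < T) :
    ∃ c > 0, ∃ C > 0, ∀ N δ : ℝ, 1 ≤ N → 0 < δ → δ ≤ c →
    volume (Bad P T N δ) ≤ ENNReal.ofReal (C * δ ^ 2) := by
  obtain ⟨c, hc, C, hC, h⟩ := shell_volume hP hd hT
  refine ⟨min c 1, by positivity, 2 * C, by positivity, fun N δ hN hδ hδc => ?_⟩
  rcases lt_or_ge (δ * N) 1 with hlt | hge
  · rw [bad_empty P hlt]; simp
  have hN0 : 0 < N := by linarith
  set J := Nat.log 2 ⌊δ * N⌋₊ with hJ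
  have hfl : ⌊δ * N⌋₊ ≠ 0 := (Nat.floor_pos.2 hge).ne'
  have hJle : (2 : ℝ) ^ J ≤ δ * N := by
    have h1 : 2 ^ J ≤ ⌊δ * N⌋₊ := Nat.pow_log_le_self 2 hfl
    have h2 := Nat.floor_le (a := δ * N) (by positivity)
    have h3 : ((2 ^ J : ℕ) : ℝ) ≤ ⌊δ * N⌋₊ := by exact_mod_cast h1
    push_cast at h3
    linarith
  have hsub : Bad P T N δ ⊆ ⋃ j ∈ Finset.range (J + 1), {τ : ℝ | τ ∈ Set.Icc (-T) T ∧
      ∃ u : Fin d → ℤ, (2 : ℝ) ^ j ≤ ‖intVec u‖ ∧ ‖intVec u‖ ≤ 2 * 2 ^ j ∧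
      ∀ i, nrst (τ * P.mulVec (intVec u) i) ≤ δ / N} := by
    rintro τ ⟨hτ, u, hu0, huN, hu⟩
    have h1 := one_le_norm_intVec hu0
    have hfu : ⌊‖intVec u‖⌋₊ ≠ 0 := (Nat.floor_pos.2 h1).ne'
    simp only [Set.mem_iUnion, Finset.mem_range, exists_prop]
    refine ⟨Nat.log 2 ⌊‖intVec u‖⌋₊, ?_, hτ, u, ?_, ?_, hu⟩
    · exact Nat.lt_succ_of_le (Nat.log_mono_right (Nat.floor_le_floor huN))
    · have h2 : 2 ^ (Nat.log 2 ⌊‖intVec u‖⌋₊) ≤ ⌊‖intVec u‖⌋₊ := Nat.pow_log_le_self 2 hfu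
      have h3 := Nat.floor_le (a := ‖intVec u‖) (norm_nonneg _)
      have h4 : ((2 ^ (Nat.log 2 ⌊‖intVec u‖⌋₊) : ℕ) : ℝ) ≤ ⌊‖intVec u‖⌋₊ := by exact_mod_cast h2
      push_cast at h4
      linarith
    · have h2 : ⌊‖intVec u‖⌋₊ < 2 ^ (Nat.log 2 ⌊‖intVec u‖⌋₊ + 1) :=
        Nat.lt_pow_succ_log_self (by norm_num) _
      have h3 := Nat.lt_floor_add_one ‖intVec u‖
      have h4 : ((⌊‖intVec u‖⌋₊ + 1 : ℕ) : ℝ) ≤ ((2 ^ (Nat.log 2 ⌊‖intVec u‖⌋₊ + 1) : ℕ) : ℝ) := by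
        exact_mod_cast h2
      push_cast at h4
      rw [pow_succ] at h4
      linarith
  refine (measure_mono hsub).trans ((measure_biUnion_finset_le _ _).trans ?_)
  have hterm : ∀ j ∈ Finset.range (J + 1), volume {τ : ℝ | τ ∈ Set.Icc (-T) T ∧
      ∃ u : Fin d → ℤ, (2 : ℝ) ^ j ≤ ‖intVec u‖ ∧ ‖intVec u‖ ≤ 2 * 2 ^ j ∧
      ∀ i, nrst (τ * P.mulVec (intVec u) i) ≤ δ / N} ≤ ENNReal.ofReal (C * (2 ^ j * (δ / N))) := by
    intro j hj
    apply h _ _ (one_le_pow₀ (by norm_num)) (by positivity)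
    have hjJ : (2 : ℝ) ^ j ≤ 2 ^ J :=
      pow_le_pow_right₀ (by norm_num) (Nat.lt_succ_iff.1 (Finset.mem_range.1 hj))
    have : δ / N * 2 ^ j ≤ δ / N * (δ * N) := by
      gcongr; linarith
    refine this.trans ?_
    have e : δ / N * (δ * N) = δ * δ := by field_simp
    rw [e]
    have h1 : δ ≤ c := hδc.trans (min_le_left _ _)
    have h2 : δ ≤ 1 := hδc.trans (min_le_right _ _)
    nlinarith
  refine (Finset.sum_le_sum hterm).trans ?_
  rw [← ENNReal.ofReal_sum_of_nonneg (fun _ _ => by positivity)]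
  apply ENNReal.ofReal_le_ofReal
  rw [← Finset.mul_sum, ← Finset.sum_mul, geom_sum_eq (by norm_num)]
  have : ((2 : ℝ) ^ (J + 1) - 1) / (2 - 1) ≤ 2 * (δ * N) := by
    rw [pow_succ]; linarith
  calc C * (((2 : ℝ) ^ (J + 1) - 1) / (2 - 1) * (δ / N)) ≤ C * (2 * (δ * N) * (δ / N)) := by gcongr
    _ = _ := by field_simp

/-! ### Counting short lattice vectors -/

/-- Volume packing bound for a `δ`-separated set in a ball of radius `ρ`. -/
lemma card_separated {E : Type*} [NormedAddCommGroup E] [NormedSpace ℝ E] [FiniteDimensional ℝ E]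
    (s : Finset E) {ρ δ : ℝ} (hδ : 0 < δ) (hρ : δ ≤ ρ) (hs : ∀ x ∈ s, ‖x‖ ≤ ρ)
    (hsep : ∀ x ∈ s, ∀ y ∈ s, x ≠ y → δ ≤ ‖x - y‖) :
    (s.card : ℝ) ≤ (4 * ρ / δ) ^ (Module.finrank ℝ E) := by
  borelize E
  let μ : Measure E := Measure.addHaar
  have hρ0 : 0 < ρ := by linarith
  have hD : (s : Set E).Pairwise (Function.onFun Disjoint fun c => Metric.ball (c : E) (δ / 2)) := by
    intro x hx y hy hxy
    apply Metric.ball_disjoint_ball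
    rw [dist_eq_norm]
    linarith [hsep x hx y hy hxy]
  have hsub : (⋃ x ∈ s, Metric.ball x (δ / 2)) ⊆ Metric.ball (0 : E) (2 * ρ) := by
    refine Set.iUnion₂_subset fun x hx => ?_
    apply Metric.ball_subset_ball'
    rw [dist_zero_right]
    linarith [hs x hx]
  have hI : (s.card : ENNReal) * ENNReal.ofReal ((δ / 2) ^ Module.finrank ℝ E) * μ (Metric.ball 0 1) ≤
      ENNReal.ofReal ((2 * ρ) ^ Module.finrank ℝ E) * μ (Metric.ball 0 1) := by
    calc _ = μ (⋃ x ∈ s, Metric.ball x (δ / 2)) := by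
          rw [measure_biUnion_finset hD fun c _ => measurableSet_ball]
          simp only [Measure.addHaar_ball_of_pos μ _ (half_pos hδ), Finset.sum_const, nsmul_eq_mul,
            mul_assoc]
      _ ≤ μ (Metric.ball 0 (2 * ρ)) := measure_mono hsub
      _ = _ := by rw [Measure.addHaar_ball_of_pos μ _ (by positivity)]
  have hJ : (s.card : ENNReal) * ENNReal.ofReal ((δ / 2) ^ Module.finrank ℝ E) ≤
      ENNReal.ofReal ((2 * ρ) ^ Module.finrank ℝ E) := by
    rwa [ENNReal.mul_le_mul_iff_left (Metric.measure_ball_pos μ _ zero_lt_one).ne'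
      measure_ball_lt_top.ne] at hI
  rw [← ENNReal.ofReal_natCast, ← ENNReal.ofReal_mul (by positivity),
    ENNReal.ofReal_le_ofReal_iff (by positivity)] at hJ
  have e : (4 * ρ / δ) ^ Module.finrank ℝ E = (2 * ρ) ^ Module.finrank ℝ E / (δ / 2) ^ Module.finrank ℝ E := by
    rw [← div_pow]; congr 1; field_simp; norm_num
  rw [e, le_div_iff₀ (by positivity)]
  exact hJ

/-- A subspace of `ℝ^d × ℝ^d` which is isotropic for the standard symplectic form has dimension at
most `d`. -/
lemma finrank_isotropic {d : ℕ} (W : Submodule ℝ ((Fin d → ℝ) × (Fin d → ℝ)))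
    (h : ∀ x ∈ W, ∀ y ∈ W, x.2 ⬝ᵥ y.1 - y.2 ⬝ᵥ x.1 = 0) : Module.finrank ℝ W ≤ d := by
  -- The complex structure `J` maps `W` injectively onto a subspace meeting `W` only in `0`.
  let J : ((Fin d → ℝ) × (Fin d → ℝ)) →ₗ[ℝ] ((Fin d → ℝ) × (Fin d → ℝ)) :=
    (LinearMap.snd ℝ _ _).prod (-LinearMap.fst ℝ _ _)
  have hJ : Function.Injective J := by
    rw [injective_iff_map_eq_zero]
    rintro ⟨a, b⟩ hab
    simp only [J, LinearMap.prod_apply, Function.prod_apply, LinearMap.snd_apply, LinearMap.neg_apply,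
      LinearMap.fst_apply, Prod.mk_eq_zero, neg_eq_zero] at hab
    simp [hab.1, hab.2]
  have hdisj : Disjoint W (W.map J) := by
    rw [Submodule.disjoint_def]
    rintro x hx ⟨y, hy, rfl⟩
    have h1 := h _ hx y hy
    simp only [J, LinearMap.prod_apply, Function.prod_apply, LinearMap.snd_apply, LinearMap.neg_apply,
      LinearMap.fst_apply, neg_dotProduct] at h1
    have h2 : 0 ≤ y.1 ⬝ᵥ y.1 := Finset.sum_nonneg fun i _ => mul_self_nonneg _
    have h3 : 0 ≤ y.2 ⬝ᵥ y.2 := Finset.sum_nonneg fun i _ => mul_self_nonneg _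
    have h4 : y.1 = 0 := dotProduct_self_eq_zero.1 (by linarith)
    have h5 : y.2 = 0 := dotProduct_self_eq_zero.1 (by linarith)
    have : y = 0 := Prod.ext h4 h5
    rw [this, map_zero]
  have h6 := Submodule.finrank_add_finrank_le_of_disjoint hdisj
  rw [← (Submodule.equivMapOfInjective J hJ W).finrank_eq] at h6
  simp at h6
  omega

/-- Short vectors of the lattice `{(u/N, N(τPu - n))}` span an isotropic subspace, which has
dimension at most `d`; so their number is at most `(4c/δ)^d` when the shortest vector has norm more
than `δ`. -/
lemma packing {d : ℕ} {P : Matrix (Fin d) (Fin d) ℝ} {c0 C0 : ℝ} (hP : GoodForm P c0 C0)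
    {T N c δ τ : ℝ} (hN : 0 < N) (hδ : 0 < δ) (hδc : δ ≤ c) (hc : 2 * (d * c ^ 2) < 1)
    (hτ : τ ∈ Set.Icc (-T) T) (hτB : τ ∉ Bad P T N δ) (A : Finset (Fin d → ℤ))
    (hA : ∀ u ∈ A, ‖intVec u‖ ≤ c * N ∧ ∀ i, nrst (τ * P.mulVec (intVec u) i) ≤ c / N) :
    (A.card : ℝ) ≤ (4 * c / δ) ^ d := by
  classical
  have hc0 : 0 < c := by linarith
  let vec : (Fin d → ℤ) → (Fin d → ℝ) × (Fin d → ℝ) := fun u =>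
    (fun i => u i / N,
      fun i => N * (τ * P.mulVec (intVec u) i - round (τ * P.mulVec (intVec u) i)))
  let W := Submodule.span ℝ (vec '' A)
  have hiso : ∀ x ∈ W, ∀ y ∈ W, x.2 ⬝ᵥ y.1 - y.2 ⬝ᵥ x.1 = 0 := by
    intro x hx y hy
    induction hx, hy using Submodule.span_induction₂ with
    | mem_mem x y hx hy =>
      obtain ⟨u, hu, rfl⟩ := hx
      obtain ⟨u', hu', rfl⟩ := hy
      have h := pairing_eq hP (hA u hu).2 (hA u' hu').2 (hA u hu).1 (hA u' hu').1 (by positivity) (by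
        have : c / N * (c * N) = c ^ 2 := by field_simp
        rw [this]; simpa using hc)
      rw [sub_self, zero_mul] at h
      rw [h]
      simp only [vec, dotProduct]
      congr 1 <;> refine Finset.sum_congr rfl fun i _ => by field_simp
    | zero_left y hy => simp
    | zero_right x hx => simp
    | add_left x y z _ _ _ h1 h2 =>
      simp only [Prod.snd_add, Prod.fst_add, add_dotProduct, dotProduct_add]; linarith
    | add_right x y z _ _ _ h1 h2 =>
      simp only [Prod.snd_add, Prod.fst_add, add_dotProduct, dotProduct_add]; linarith
    | smul_left r x y _ _ h =>
      simp only [Prod.smul_snd, Prod.smul_fst, smul_dotProduct, dotProduct_smul, smul_eq_mul]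
      rw [← mul_sub, h, mul_zero]
    | smul_right r x y _ _ h =>
      simp only [Prod.smul_snd, Prod.smul_fst, smul_dotProduct, dotProduct_smul, smul_eq_mul]
      rw [← mul_sub, h, mul_zero]
  have hsep : ∀ u u' : Fin d → ℤ, u ≠ u' → δ ≤ ‖vec u - vec u'‖ := by
    intro u u' hne
    by_contra! hlt
    apply hτB
    refine ⟨hτ, u - u', sub_ne_zero.2 hne, ?_, ?_⟩
    · rw [pi_norm_le_iff_of_nonneg (by positivity)]
      intro i
      have h1 : |(u i : ℝ) / N - u' i / N| ≤ δ :=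
        ((norm_le_pi_norm (vec u - vec u').1 i).trans (norm_fst_le _)).trans hlt.le
      rw [← sub_div, abs_div, abs_of_pos hN, div_le_iff₀ hN] at h1
      simpa [intVec] using h1
    · intro i
      have h1 : |N * (τ * P.mulVec (intVec u) i - round (τ * P.mulVec (intVec u) i)) -
         N * (τ * P.mulVec (intVec u') i - round (τ * P.mulVec (intVec u') i))| ≤ δ :=
        ((norm_le_pi_norm (vec u - vec u').2 i).trans (norm_snd_le _)).trans hlt.le
      rw [← mul_sub, abs_mul, abs_of_pos hN, ← le_div_iff₀' hN] at h1
      refine le_trans (round_le _ (round (τ * P.mulVec (intVec u) i) -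
        round (τ * P.mulVec (intVec u') i))) (le_trans (le_of_eq ?_) h1)
      have : intVec (u - u') = intVec u - intVec u' := by ext; simp [intVec]
      rw [this, Matrix.mulVec_sub]
      congr 1
      push_cast
      simp only [Pi.sub_apply]
      ring
  have hnorm : ∀ u ∈ A, ‖vec u‖ ≤ c := by
    intro u hu
    rw [norm_prod_le_iff, pi_norm_le_iff_of_nonneg hc0.le, pi_norm_le_iff_of_nonneg hc0.le]
    refine ⟨fun i => ?_, fun i => ?_⟩
    · have := (norm_le_pi_norm (intVec u) i).trans (hA u hu).1
      simp only [vec, norm_div, Real.norm_eq_abs, abs_of_pos hN]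
      rw [div_le_iff₀ hN]
      exact this
    · have := (hA u hu).2 i
      simp only [vec, norm_mul, Real.norm_eq_abs, abs_of_pos hN]
      rw [← le_div_iff₀' hN]
      exact this
  have hinj : Function.Injective vec := by
    intro u u' h
    by_contra hne
    have := hsep u u' hne
    rw [h, sub_self, norm_zero] at this
    linarith
  let g : A → W := fun u => ⟨vec u, Submodule.subset_span ⟨u, u.2, rfl⟩⟩
  have hg : Function.Injective g := fun a b hab => by
    apply Subtype.ext; apply hinj; exact congrArg Subtype.val hab
  have hcard := card_separated (E := W) (Finset.univ.image g) hδ hδc (by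
    intro x hx
    obtain ⟨u, -, rfl⟩ := Finset.mem_image.1 hx
    exact hnorm u u.2) (by
    intro x hx y hy hxy
    obtain ⟨u, -, rfl⟩ := Finset.mem_image.1 hx
    obtain ⟨u', -, rfl⟩ := Finset.mem_image.1 hy
    refine hsep u u' fun h => hxy ?_
    simp only [g, h])
  rw [Finset.card_image_of_injective _ hg, Finset.card_univ, Fintype.card_coe] at hcard
  refine hcard.trans (pow_le_pow_right₀ ?_ (finrank_isotropic W hiso))
  rw [le_div_iff₀ hδ]; linarith

/-! ### Weighted sums over the lattice -/

lemma sum_inv_sq_le (s : Finset ℤ) :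
    ∑ l ∈ s, 1 / (1 + (l : ℝ) ^ 2) ≤ 1 + ∑' l : ℤ, 1 / (l : ℝ) ^ 2 := by
  have hs : Summable fun l : ℤ => 1 / (l : ℝ) ^ 2 :=
    Real.summable_one_div_int_pow.2 (by norm_num)
  have h1 : ∀ l ∈ s, 1 / (1 + (l : ℝ) ^ 2) ≤ (if l = 0 then 1 else 0) + 1 / (l : ℝ) ^ 2 := by
    intro l _
    split_ifs with h
    · simp [h]
    · have : (0 : ℝ) < (l : ℝ) ^ 2 := by positivity
      rw [zero_add]
      gcongr; linarith
  refine (Finset.sum_le_sum h1).trans ?_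
  rw [Finset.sum_add_distrib]
  refine add_le_add ?_ (hs.sum_le_tsum s fun _ _ => by positivity)
  rw [Finset.sum_ite_eq']
  split_ifs <;> norm_num

lemma weight_floor_le {c x : ℝ} (hc : 0 < c) (hc1 : c ≤ 1) :
    1 / (1 + x ^ 2) ≤ 3 / c ^ 2 * (1 / (1 + (⌊x / c⌋ : ℝ) ^ 2)) := by
  have h1 := Int.floor_le (x / c)
  have h2 := Int.lt_floor_add_one (x / c)
  set l : ℝ := (⌊x / c⌋ : ℝ)
  set y := x / c with hy
  have hx : x = c * y := by rw [hy]; field_simp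
  have h3 : l ^ 2 ≤ 2 * y ^ 2 + 2 := by nlinarith [sq_nonneg (y + (y - l)), sq_nonneg (y-l)]
  rw [div_mul_div_comm, div_le_div_iff₀ (by positivity) (by positivity), hx]
  have hc2 : c ^ 2 ≤ 1 := by nlinarith
  nlinarith [sq_nonneg (c * y), sq_nonneg c, mul_le_mul_of_nonneg_left h3 (sq_nonneg c)]

/-- Decomposing `(u/N, N(τPu - n))` into cells of side `c`, a rapidly decreasing sum over the lattice
is bounded by the maximal number of lattice points in one cell. -/
lemma cell_sum {d : ℕ} (P : Matrix (Fin d) (Fin d) ℝ) {c : ℝ} (hc : 0 < c) (hc1 : c ≤ 1) :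
    ∃ K > 0, ∀ (N τ D : ℝ), 0 < N →
      (∀ A : Finset (Fin d → ℤ), (∀ u ∈ A, ‖intVec u‖ ≤ c * N ∧
        ∀ i, nrst (τ * P.mulVec (intVec u) i) ≤ c / N) → (A.card : ℝ) ≤ D) →
      ∀ U : Finset (Fin d → ℤ), (∀ u ∈ U, ‖intVec u‖ ≤ 2 * N) →
      ∑ u ∈ U, ∏ i, 1 / (1 + (N * nrst (τ * P.mulVec (intVec u) i)) ^ 2) ≤ K * D := by
  classical
  set S : ℝ := 1 + ∑' l : ℤ, 1 / (l : ℝ) ^ 2 with hS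
  have hSpos : 0 < S := by
    have : 0 ≤ ∑' l : ℤ, 1 / (l : ℝ) ^ 2 := tsum_nonneg fun _ => by positivity
    linarith
  set k0 : ℤ := ⌈2 / c⌉ with hk0
  have hk0pos : 0 ≤ k0 := Int.ceil_nonneg (by positivity)
  set KK : Finset (Fin d → ℤ) := Fintype.piFinset fun _ => Finset.Icc (-k0) k0 with hKK
  have hKKpos : 0 < KK.card := Finset.card_pos.2
    ⟨0, by simp [hKK, Fintype.mem_piFinset, hk0pos]⟩
  refine ⟨(KK.card : ℝ) * (3 / c ^ 2 * S) ^ d, by positivity, ?_⟩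
  intro N τ D hN hA U hU
  set ξ : (Fin d → ℤ) → Fin d → ℝ := fun u i => τ * P.mulVec (intVec u) i with hξ
  have hD : 0 ≤ D := by simpa using hA ∅ (by simp)
  let kk : (Fin d → ℤ) → Fin d → ℤ := fun u i => ⌊(u i : ℝ) / (c * N)⌋
  let ll : (Fin d → ℤ) → Fin d → ℤ := fun u i => ⌊N * (ξ u i - round (ξ u i)) / c⌋
  set L : ℤ := ⌈N / c⌉ with hL
  set LL : Finset (Fin d → ℤ) := Fintype.piFinset fun _ => Finset.Icc (-L) L with hLL
  have hmaps : ∀ u ∈ U, (kk u, ll u) ∈ KK ×ˢ LL := by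
    intro u hu
    simp only [Finset.mem_product, hKK, hLL, Fintype.mem_piFinset, Finset.mem_Icc]
    refine ⟨fun i => ?_, fun i => ?_⟩
    · have h1 : |(u i : ℝ)| ≤ 2 * N := (norm_le_pi_norm (intVec u) i).trans (hU u hu)
      have h2 : |(u i : ℝ) / (c * N)| ≤ 2 / c := by
        rw [abs_div, abs_of_pos (by positivity : 0 < c * N), div_le_div_iff₀ (by positivity) hc]
        nlinarith
      rw [abs_le] at h2
      constructor
      · rw [hk0, ← Int.floor_neg]; exact Int.floor_le_floor h2.1
      · exact (Int.floor_le_floor h2.2).trans (Int.floor_le_ceil _)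
    · have h1 : |ξ u i - round (ξ u i)| ≤ 1 := (abs_sub_round _).trans (by norm_num)
      have h2 : |N * (ξ u i - round (ξ u i)) / c| ≤ N / c := by
        rw [abs_div, abs_mul, abs_of_pos hN, abs_of_pos hc]
        gcongr; nlinarith
      rw [abs_le] at h2
      constructor
      · rw [hL, ← Int.floor_neg]; exact Int.floor_le_floor h2.1
      · exact (Int.floor_le_floor h2.2).trans (Int.floor_le_ceil _)
  have hw : ∀ u, ∏ i, 1 / (1 + (N * nrst (ξ u i)) ^ 2) ≤
      ∏ i, (3 / c ^ 2 * (1 / (1 + (ll u i : ℝ) ^ 2))) := by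
    intro u
    refine Finset.prod_le_prod (fun i _ => by positivity) fun i _ => ?_
    have : (N * nrst (ξ u i)) ^ 2 = (N * (ξ u i - round (ξ u i))) ^ 2 := by
      rw [nrst, mul_pow, sq_abs, mul_pow]
    rw [this]
    exact weight_floor_le hc hc1
  have hfib : ∀ p ∈ KK ×ˢ LL,
      ((U.filter fun u => (kk u, ll u) = p).card : ℝ) ≤ D := by
    intro p _
    rcases (U.filter fun u => (kk u, ll u) = p).eq_empty_or_nonempty with h0 | ⟨u0, hu0⟩
    · rw [h0]; simpa using hD
    have hinj : Function.Injective fun u : Fin d → ℤ => u - u0 := sub_left_injective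
    rw [← Finset.card_image_of_injective _ hinj]
    apply hA
    intro v hv
    obtain ⟨u, hu, rfl⟩ := Finset.mem_image.1 hv
    have h1 : (kk u, ll u) = (kk u0, ll u0) :=
      (Finset.mem_filter.1 hu).2.trans (Finset.mem_filter.1 hu0).2.symm
    have hk : kk u = kk u0 := congrArg Prod.fst h1
    have hl : ll u = ll u0 := congrArg Prod.snd h1
    have hsub : intVec (u - u0) = intVec u - intVec u0 := by ext; simp [intVec]
    refine ⟨?_, fun i => ?_⟩
    · rw [pi_norm_le_iff_of_nonneg (by positivity)]
      intro i
      have := Int.abs_sub_lt_one_of_floor_eq_floor (congrFun hk i)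
      rw [← sub_div, abs_div, abs_of_pos (by positivity : 0 < c * N),
        div_lt_one (by positivity)] at this
      simpa [intVec] using this.le
    · have := Int.abs_sub_lt_one_of_floor_eq_floor (congrFun hl i)
      rw [← sub_div, abs_div, abs_of_pos hc, div_lt_one hc, ← mul_sub, abs_mul, abs_of_pos hN,
        ← lt_div_iff₀' hN] at this
      refine le_trans (round_le _ (round (ξ u i) - round (ξ u0 i))) (le_trans (le_of_eq ?_) this.le)
      rw [hsub, Matrix.mulVec_sub]
      congr 1
      push_cast
      simp only [Pi.sub_apply, hξ]
      ring
  calc ∑ u ∈ U, ∏ i, 1 / (1 + (N * nrst (ξ u i)) ^ 2)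
      ≤ ∑ u ∈ U, ∏ i, (3 / c ^ 2 * (1 / (1 + (ll u i : ℝ) ^ 2))) :=
        Finset.sum_le_sum fun u _ => hw u
    _ = ∑ p ∈ KK ×ˢ LL, ∑ u ∈ U.filter (fun u => (kk u, ll u) = p),
          ∏ i, (3 / c ^ 2 * (1 / (1 + (ll u i : ℝ) ^ 2))) :=
        (Finset.sum_fiberwise_of_maps_to hmaps _).symm
    _ ≤ ∑ p ∈ KK ×ˢ LL, D * ∏ i, (3 / c ^ 2 * (1 / (1 + (p.2 i : ℝ) ^ 2))) := by
        refine Finset.sum_le_sum fun p hp => ?_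
        have : ∀ u ∈ U.filter (fun u => (kk u, ll u) = p),
            ∏ i, (3 / c ^ 2 * (1 / (1 + (ll u i : ℝ) ^ 2))) =
            ∏ i, (3 / c ^ 2 * (1 / (1 + (p.2 i : ℝ) ^ 2))) := by
          intro u hu
          have h := (Finset.mem_filter.1 hu).2
          rw [← h]
        rw [Finset.sum_congr rfl this, Finset.sum_const, nsmul_eq_mul]
        refine mul_le_mul_of_nonneg_right (hfib p hp) (Finset.prod_nonneg fun i _ => by positivity)
    _ = D * (KK.card * ∑ l ∈ LL, ∏ i, (3 / c ^ 2 * (1 / (1 + (l i : ℝ) ^ 2)))) := by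
        rw [← Finset.mul_sum, Finset.sum_product]
        simp only [Finset.sum_const, nsmul_eq_mul]
    _ = D * (KK.card * ∏ _i : Fin d, ∑ l ∈ Finset.Icc (-L) L, (3 / c ^ 2 * (1 / (1 + (l : ℝ) ^ 2)))) := by
        rw [hLL, Finset.prod_univ_sum]
    _ ≤ D * (KK.card * ∏ _i : Fin d, (3 / c ^ 2 * S)) := by
        refine mul_le_mul_of_nonneg_left (mul_le_mul_of_nonneg_left ?_ (by positivity)) hD
        refine Finset.prod_le_prod (fun i _ => Finset.sum_nonneg fun _ _ => by positivity)
          fun i _ => ?_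
        rw [← Finset.mul_sum]
        exact mul_le_mul_of_nonneg_left (sum_inv_sq_le _) (by positivity)
    _ = _ := by simp; ring

/-! ### One-dimensional exponential sums -/

/-- The integer-valued triangle function `max(0, N - |y|)`. -/
def triZ (N : ℕ) (y : ℤ) : ℤ := max 0 ((N : ℤ) - max y (-y))

/-- The triangular weight `max(0, 1 - |y|/N)` on the integers. -/
noncomputable def tri (N : ℕ) (y : ℤ) : ℝ := (triZ N y : ℝ) / N

lemma tri_nonneg (N : ℕ) (y : ℤ) : 0 ≤ tri N y := by
  have : 0 ≤ triZ N y := le_max_left _ _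
  have : (0 : ℝ) ≤ triZ N y := by exact_mod_cast this
  unfold tri; positivity

lemma tri_le_one {N : ℕ} (hN : 0 < N) (y : ℤ) : tri N y ≤ 1 := by
  have h : triZ N y ≤ N := by unfold triZ; omega
  have h' : (triZ N y : ℝ) ≤ N := by exact_mod_cast h
  have : (0 : ℝ) < N := by exact_mod_cast hN
  rw [tri, div_le_one this]; exact h'

lemma tri_eq_zero {N : ℕ} {y : ℤ} (hy : y ∉ Finset.Icc (-(N : ℤ)) N) : tri N y = 0 := by
  have : triZ N y = 0 := by
    rw [Finset.mem_Icc] at hy; unfold triZ; omega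
  simp [tri, this]

lemma half_le_tri {N : ℕ} (hN : 0 < N) {y : ℤ} (h1 : 2 * y ≤ N) (h2 : -(2 * y) ≤ N) :
    1 / 2 ≤ tri N y := by
  have h : (N : ℤ) ≤ 2 * triZ N y := by unfold triZ; omega
  have h' : (N : ℝ) ≤ 2 * (triZ N y : ℝ) := by exact_mod_cast h
  have : (0 : ℝ) < N := by exact_mod_cast hN
  rw [tri, div_le_div_iff₀ (by norm_num) this]; linarith

lemma tri_diff {N : ℕ} (x y : ℤ) (h : y = x + 1 ∨ x = y + 1) :
    |tri N x - tri N y| ≤ 1 / N := by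
  have h : |triZ N x - triZ N y| ≤ 1 := by rw [abs_le]; unfold triZ; omega
  have h' : |(triZ N x : ℝ) - triZ N y| ≤ 1 := by exact_mod_cast h
  rw [tri, tri, ← sub_div, abs_div, Nat.abs_cast]
  gcongr

lemma tri_second_diff {N : ℕ} (y : ℤ) :
    |tri N (y + 1) + tri N (y - 1) - 2 * tri N y| ≤
      2 / N * ((if y = 0 then 1 else 0) + (if y = N then 1 else 0) + (if y = -N then 1 else 0)) := by
  have h : |triZ N (y + 1) + triZ N (y - 1) - 2 * triZ N y| ≤
      2 * ((if y = 0 then 1 else 0) + (if y = N then 1 else 0) + (if y = -N then 1 else 0)) := by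
    rw [abs_le]; unfold triZ; constructor <;> split_ifs <;> omega
  have h' : |(triZ N (y + 1) : ℝ) + triZ N (y - 1) - 2 * triZ N y| ≤
      2 * ((if y = 0 then 1 else 0) + (if y = N then 1 else 0) + (if y = -N then 1 else 0)) := by
    exact_mod_cast h
  have e : tri N (y + 1) + tri N (y - 1) - 2 * tri N y =
      ((triZ N (y + 1) : ℝ) + triZ N (y - 1) - 2 * triZ N y) / N := by
    unfold tri; ring
  rw [e, abs_div, Nat.abs_cast, div_mul_eq_mul_div]
  gcongr

lemma sum_tri_second_diff {N : ℕ} (s : Finset ℤ) (u : ℤ) :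
    ∑ y ∈ s, |tri N (y + u + 1) + tri N (y + u - 1) - 2 * tri N (y + u)| ≤ 6 / N := by
  refine (Finset.sum_le_sum fun y _ => tri_second_diff (y + u)).trans ?_
  rw [← Finset.mul_sum, Finset.sum_add_distrib, Finset.sum_add_distrib]
  have key : ∀ a : ℤ, ∑ y ∈ s, (if y + u = a then (1 : ℝ) else 0) ≤ 1 := by
    intro a
    have : ∀ y ∈ s, (if y + u = a then (1 : ℝ) else 0) = if y = a - u then 1 else 0 := by
      intro y _
      congr 1
      exact propext ⟨fun h => by omega, fun h => by omega⟩
    rw [Finset.sum_congr rfl this, Finset.sum_ite_eq']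
    split_ifs <;> norm_num
  have h1 := key 0
  have h2 := key N
  have h3 := key (-N)
  calc _ ≤ 2 / (N : ℝ) * (1 + 1 + 1) := by gcongr
    _ = _ := by ring

lemma sixteen_nrst_sq_le (ξ : ℝ) :
    16 * nrst ξ ^ 2 ≤ 2 - 2 * Real.cos (2 * Real.pi * ξ) := by
  have h1 : Real.cos (2 * Real.pi * ξ) = Real.cos (2 * (Real.pi * nrst ξ)) := by
    have : Real.cos (2 * (Real.pi * nrst ξ)) = Real.cos (2 * Real.pi * (ξ - round ξ)) := by
      rcases abs_choice (ξ - round ξ) with h | h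
      · rw [nrst, h]; ring_nf
      · rw [nrst, h, ← Real.cos_neg]; ring_nf
    rw [this, mul_sub, mul_comm (2 * Real.pi) (round ξ : ℝ), Real.cos_sub_int_mul_two_pi]
  rw [h1, Real.cos_two_mul, Real.cos_sq']
  have h0 : 0 ≤ nrst ξ := abs_nonneg _
  have h2 : nrst ξ ≤ 1 / 2 := abs_sub_round _
  have h3 := Real.mul_le_sin (x := Real.pi * nrst ξ) (by positivity) (by nlinarith [Real.pi_pos])
  have h4 : 2 / Real.pi * (Real.pi * nrst ξ) = 2 * nrst ξ := by field_simp
  rw [h4] at h3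
  nlinarith

/-- One-dimensional exponential sum with the product of two triangular weights: summing twice by
parts gives quadratic decay in the distance of the frequency to the integers. -/
lemma expsum {N : ℕ} (hN : 0 < N) (u : ℤ) (ξ : ℝ) :
    ‖∑ y ∈ Finset.Icc (-(N : ℤ)) N, ((tri N y * tri N (y + u) : ℝ) : ℂ) *
      Complex.exp ((2 * Real.pi * ξ * y : ℝ) * Complex.I)‖ ≤
      5 * N * (1 / (1 + (N * nrst ξ) ^ 2)) := by
  have hN' : (0 : ℝ) < N := by exact_mod_cast hN
  have hN1 : (1 : ℝ) ≤ N := by exact_mod_cast hN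
  set f : ℤ → ℝ := fun y => tri N y * tri N (y + u) with hf
  set e : ℤ → ℂ := fun y => Complex.exp ((2 * Real.pi * ξ * y : ℝ) * Complex.I) with he
  have hen : ∀ y, ‖e y‖ = 1 := fun y => Complex.norm_exp_ofReal_mul_I _
  have headd : ∀ y z, e (y + z) = e y * e z := by
    intro y z
    simp only [he]
    rw [← Complex.exp_add]
    congr 1
    push_cast; ring
  have hf0 : ∀ y, y ∉ Finset.Icc (-(N : ℤ)) N → f y = 0 := by
    intro y hy; simp only [hf, tri_eq_zero hy, zero_mul]
  have hf1 : ∀ y, |f y| ≤ 1 := by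
    intro y
    rw [abs_of_nonneg (mul_nonneg (tri_nonneg _ _) (tri_nonneg _ _))]
    exact mul_le_one₀ (tri_le_one hN _) (tri_nonneg _ _) (tri_le_one hN _)
  set S : ℂ := ∑ y ∈ Finset.Icc (-(N : ℤ)) N, (f y : ℂ) * e y with hS
  set B : Finset ℤ := Finset.Icc (-(N : ℤ) - 1) (N + 1) with hB
  have hcardB : (B.card : ℝ) ≤ 5 * N := by
    have : B.card ≤ 5 * N := by rw [hB, Int.card_Icc]; omega
    exact_mod_cast this
  have triv : ‖S‖ ≤ 3 * N := by
    refine (norm_sum_le _ _).trans ?_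
    have : ∀ y ∈ Finset.Icc (-(N : ℤ)) N, ‖(f y : ℂ) * e y‖ ≤ 1 := by
      intro y _
      rw [norm_mul, hen, mul_one, Complex.norm_real]; exact hf1 y
    refine (Finset.sum_le_sum this).trans ?_
    rw [Finset.sum_const, nsmul_eq_mul, mul_one, Int.card_Icc]
    have : ((N : ℤ) + 1 - -(N : ℤ)).toNat ≤ 3 * N := by omega
    exact_mod_cast this
  -- Multiplying `S` by `e t` shifts the weights, so `e 1 + e (-1) - 2 e 0` takes their second
  -- difference; `B` contains all three shifted windows.
  have hshift : ∀ t : ℤ, t = 0 ∨ t = 1 ∨ t = -1 →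
      S * e t = ∑ y ∈ B, (f (y - t) : ℂ) * e y := by
    intro t ht
    rw [hS, Finset.sum_mul]
    have : ∀ y ∈ Finset.Icc (-(N : ℤ)) N, (f y : ℂ) * e y * e t =
        (fun y => (f (y - t) : ℂ) * e y) (y + t) := by
      intro y _
      simp only [add_sub_cancel_right, headd]; ring
    rw [Finset.sum_congr rfl this, ← Finset.sum_image (s := Finset.Icc (-(N : ℤ)) N)
      (g := fun y => y + t) (f := fun y => (f (y - t) : ℂ) * e y)
      (fun a _ b _ h => by simpa using h)]
    apply Finset.sum_subset
    · intro y hy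
      obtain ⟨z, hz, rfl⟩ := Finset.mem_image.1 hy
      rw [Finset.mem_Icc] at hz
      rw [hB, Finset.mem_Icc]
      omega
    · intro y _ hy
      have : y - t ∉ Finset.Icc (-(N : ℤ)) N := fun h =>
        hy (Finset.mem_image.2 ⟨y - t, h, by simp⟩)
      rw [hf0 _ this]; simp
  have hmain : S * (e 1 + e (-1) - 2 * e 0) =
      ∑ y ∈ B, ((f (y - 1) + f (y + 1) - 2 * f y : ℝ) : ℂ) * e y := by
    have h1 := hshift 1 (by simp)
    have h2 := hshift (-1) (by simp)
    have h3 := hshift 0 (by simp)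
    have : S * (e 1 + e (-1) - 2 * e 0) = S * e 1 + S * e (-1) - 2 * (S * e 0) := by ring
    rw [this, h1, h2, h3, Finset.mul_sum, ← Finset.sum_add_distrib, ← Finset.sum_sub_distrib]
    refine Finset.sum_congr rfl fun y _ => ?_
    simp only [sub_neg_eq_add, sub_zero]
    push_cast
    ring
  have hfac : e 1 + e (-1) - 2 * e 0 = ((2 * Real.cos (2 * Real.pi * ξ) - 2 : ℝ) : ℂ) := by
    simp only [he]
    have h1 : ((2 * Real.pi * ξ * (1 : ℤ) : ℝ) : ℂ) * Complex.I =
      (2 * Real.pi * ξ : ℝ) * Complex.I := by push_cast; ring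
    have h2 : ((2 * Real.pi * ξ * (-1 : ℤ) : ℝ) : ℂ) * Complex.I =
      -((2 * Real.pi * ξ : ℝ) * Complex.I) := by push_cast; ring
    have h3 : ((2 * Real.pi * ξ * (0 : ℤ) : ℝ) : ℂ) * Complex.I = 0 := by push_cast; ring
    rw [h1, h2, h3, Complex.exp_zero, Complex.ofReal_sub,
      Complex.ofReal_mul 2 (Real.cos _), Complex.ofReal_cos,
      Complex.cos]
    push_cast
    ring_nf
  have hnormfac : 16 * nrst ξ ^ 2 ≤ ‖e 1 + e (-1) - 2 * e 0‖ := by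
    rw [hfac, Complex.norm_real, Real.norm_eq_abs, abs_sub_comm]
    exact (sixteen_nrst_sq_le ξ).trans (le_abs_self _)
  have hdiff : ∀ y ∈ B, |f (y - 1) + f (y + 1) - 2 * f y| ≤
      |tri N (y + 0 + 1) + tri N (y + 0 - 1) - 2 * tri N (y + 0)| +
      |tri N (y + u + 1) + tri N (y + u - 1) - 2 * tri N (y + u)| + 2 / (N : ℝ) ^ 2 := by
    intro y _
    have e1 : y + 1 + u = y + u + 1 := by ring
    have e2 : y - 1 + u = y + u - 1 := by ring
    simp only [hf, e1, e2, add_zero]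
    -- Discrete product rule for the second difference of a product.
    have hid : tri N (y - 1) * tri N (y + u - 1) + tri N (y + 1) * tri N (y + u + 1)
        - 2 * (tri N y * tri N (y + u)) =
        tri N (y + u) * (tri N (y + 1) + tri N (y - 1) - 2 * tri N y) +
        tri N y * (tri N (y + u + 1) + tri N (y + u - 1) - 2 * tri N (y + u)) +
        (tri N (y + 1) - tri N y) * (tri N (y + u + 1) - tri N (y + u)) +
        (tri N (y - 1) - tri N y) * (tri N (y + u - 1) - tri N (y + u)) := by ring
    rw [hid]
    have b : ∀ a x : ℝ, 0 ≤ a → a ≤ 1 → |a * x| ≤ |x| := by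
      intro a x h0 h1
      rw [abs_mul, abs_of_nonneg h0]
      exact mul_le_of_le_one_left (abs_nonneg _) h1
    have b2 : ∀ x y : ℝ, |x| ≤ 1 / N → |y| ≤ 1 / N → |x * y| ≤ 1 / (N : ℝ) ^ 2 := by
      intro x y hx hy
      rw [abs_mul]
      calc |x| * |y| ≤ 1 / N * (1 / N) := by gcongr
        _ = _ := by field_simp
    have t1 := b _ (tri N (y + 1) + tri N (y - 1) - 2 * tri N y) (tri_nonneg N (y + u))
      (tri_le_one hN _)
    have t2 := b _ (tri N (y + u + 1) + tri N (y + u - 1) - 2 * tri N (y + u)) (tri_nonneg N y)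
      (tri_le_one hN _)
    have t3 := b2 _ _ (tri_diff (N := N) (y + 1) y (by omega))
      (tri_diff (N := N) (y + u + 1) (y + u) (by omega))
    have t4 := b2 _ _ (tri_diff (N := N) (y - 1) y (by omega))
      (tri_diff (N := N) (y + u - 1) (y + u) (by omega))
    have e3 : 2 / (N : ℝ) ^ 2 = 1 / (N : ℝ) ^ 2 + 1 / (N : ℝ) ^ 2 := by ring
    rw [e3]
    refine (abs_add_le _ _).trans ?_
    rw [← add_assoc]
    refine add_le_add ((abs_add_le _ _).trans (add_le_add ((abs_add_le _ _).trans ?_) t3)) t4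
    exact add_le_add t1 t2
  have hbound : ‖S‖ * (16 * nrst ξ ^ 2) ≤ 22 / N := by
    calc ‖S‖ * (16 * nrst ξ ^ 2) ≤ ‖S * (e 1 + e (-1) - 2 * e 0)‖ := by
          rw [norm_mul]; gcongr
      _ ≤ ∑ y ∈ B, ‖((f (y - 1) + f (y + 1) - 2 * f y : ℝ) : ℂ) * e y‖ := by
          rw [hmain]; exact norm_sum_le _ _
      _ = ∑ y ∈ B, |f (y - 1) + f (y + 1) - 2 * f y| := by
          refine Finset.sum_congr rfl fun y _ => ?_
          rw [norm_mul, hen, mul_one, Complex.norm_real, Real.norm_eq_abs]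
      _ ≤ _ := Finset.sum_le_sum hdiff
      _ ≤ 6 / N + 6 / N + 5 * N * (2 / (N : ℝ) ^ 2) := by
          rw [Finset.sum_add_distrib, Finset.sum_add_distrib, Finset.sum_const, nsmul_eq_mul]
          have g1 := sum_tri_second_diff (N := N) B 0
          have g2 := sum_tri_second_diff (N := N) B u
          gcongr
      _ = 22 / N := by field_simp; norm_num
  rw [mul_one_div, le_div_iff₀ (by positivity)]
  have : ‖S‖ * nrst ξ ^ 2 * N ≤ 22 / 16 := by
    rw [le_div_iff₀ hN'] at hbound; linarith
  have h5 : ‖S‖ * (1 + (N * nrst ξ) ^ 2) = ‖S‖ + N * (‖S‖ * nrst ξ ^ 2 * N) := by ring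
  rw [h5]
  nlinarith

/-! ### Weyl differencing for the theta sum -/

/-- The integer points of the cube of half-side `N`. -/
noncomputable def box (d : ℕ) (N : ℤ) : Finset (Fin d → ℤ) := Fintype.piFinset fun _ => Finset.Icc (-N) N

lemma mem_box {d : ℕ} {N : ℤ} {x : Fin d → ℤ} : x ∈ box d N ↔ ∀ i, -N ≤ x i ∧ x i ≤ N := by
  simp [box]

/-- The product of triangular weights, a smooth cut-off to the cube of half-side `N`. -/
noncomputable def wt {d : ℕ} (N : ℕ) (x : Fin d → ℤ) : ℝ := ∏ i, tri N (x i)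

/-- The weighted theta sum of the form `Q[x - M] - m` at time `τ`. -/
noncomputable def theta {d : ℕ} (Q : Matrix (Fin d) (Fin d) ℝ) (M : Fin d → ℝ) (m : ℝ) (N : ℕ)
    (τ : ℝ) : ℂ :=
  ∑ x ∈ box d N, (wt N x : ℂ) *
    Complex.exp ((τ * (quadForm Q (intVec x - M) - m) : ℝ) * Complex.I)

lemma wt_nonneg {d : ℕ} (N : ℕ) (x : Fin d → ℤ) : 0 ≤ wt N x :=
  Finset.prod_nonneg fun _ _ => tri_nonneg _ _

lemma wt_eq_zero {d : ℕ} {N : ℕ} {x : Fin d → ℤ} (h : x ∉ box d N) : wt N x = 0 := by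
  rw [mem_box] at h
  push Not at h
  obtain ⟨i, hi⟩ := h
  refine Finset.prod_eq_zero (Finset.mem_univ i) (tri_eq_zero ?_)
  rw [Finset.mem_Icc]
  intro h
  exact absurd h.2 (not_le.2 (hi h.1))

lemma quadForm_add {d : ℕ} {Q : Matrix (Fin d) (Fin d) ℝ} (hQ : Q.IsSymm) (v u : Fin d → ℝ) :
    quadForm Q (v + u) = quadForm Q v + 2 * (Q.mulVec u ⬝ᵥ v) + quadForm Q u := by
  have hs : Q.mulVec v ⬝ᵥ u = Q.mulVec u ⬝ᵥ v := by
    rw [dotProduct_comm, Matrix.dotProduct_mulVec, ← Matrix.mulVec_transpose, hQ.eq]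
  change Q.mulVec (v + u) ⬝ᵥ (v + u) = Q.mulVec v ⬝ᵥ v + 2 * (Q.mulVec u ⬝ᵥ v) + Q.mulVec u ⬝ᵥ u
  rw [Matrix.mulVec_add, add_dotProduct, dotProduct_add, dotProduct_add, hs]
  ring

/-- Weyl differencing: the square of the theta sum is dominated by a sum over differences `u` of
products of one-dimensional kernels at the frequencies `τ (Qu)_i / π`. -/
lemma weyl {d : ℕ} {Q : Matrix (Fin d) (Fin d) ℝ} (hQ : Q.IsSymm) (M : Fin d → ℝ) (m : ℝ)
    {N : ℕ} (hN : 0 < N) (τ : ℝ) :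
    ‖theta Q M m N τ‖ ^ 2 ≤ (5 * N : ℝ) ^ d * ∑ u ∈ box d (2 * N),
      ∏ i, 1 / (1 + (N * nrst (τ / Real.pi * Q.mulVec (intVec u) i)) ^ 2) := by
  set E : (Fin d → ℤ) → ℂ := fun x =>
    Complex.exp ((τ * (quadForm Q (intVec x - M) - m) : ℝ) * Complex.I) with hE
  have hconj : ∀ x, (starRingEnd ℂ) (E x) =
      Complex.exp (-((τ * (quadForm Q (intVec x - M) - m) : ℝ) * Complex.I)) := by
    intro x
    simp only [hE]
    rw [← Complex.exp_conj, map_mul, Complex.conj_ofReal, Complex.conj_I, mul_neg]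
  have hEE : ∀ u y : Fin d → ℤ, E (y + u) * (starRingEnd ℂ) (E y) =
      Complex.exp ((τ * (quadForm Q (intVec u) - 2 * (Q.mulVec (intVec u) ⬝ᵥ M)) : ℝ) * Complex.I) *
      ∏ i, Complex.exp ((2 * Real.pi * (τ / Real.pi * Q.mulVec (intVec u) i) * y i : ℝ) *
        Complex.I) := by
    intro u y
    rw [hconj]
    simp only [hE]
    rw [← Complex.exp_add, ← Complex.exp_sum, ← Complex.exp_add, ← sub_eq_add_neg, ← sub_mul,
      ← Complex.ofReal_sub, ← Finset.sum_mul, ← add_mul, ← Complex.ofReal_sum,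
      ← Complex.ofReal_add]
    congr 3
    have h1 : intVec (y + u) - M = (intVec y - M) + intVec u := by
      ext i; simp [intVec]; ring
    rw [h1, quadForm_add hQ, dotProduct_sub]
    have h2 : ∑ i, 2 * Real.pi * (τ / Real.pi * Q.mulVec (intVec u) i) * (y i : ℝ) =
        2 * τ * (Q.mulVec (intVec u) ⬝ᵥ intVec y) := by
      rw [dotProduct, Finset.mul_sum]
      refine Finset.sum_congr rfl fun i _ => ?_
      have := Real.pi_ne_zero
      simp only [intVec]
      field_simp
    rw [h2]; ring
  have hsq : ((‖theta Q M m N τ‖ ^ 2 : ℝ) : ℂ) =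
      ∑ u ∈ box d (2 * N), ∑ y ∈ box d N,
        ((wt N y * wt N (y + u) : ℝ) : ℂ) * (E (y + u) * (starRingEnd ℂ) (E y)) := by
    rw [← Complex.normSq_eq_norm_sq, ← Complex.mul_conj, Finset.sum_comm]
    conv_lhs => rw [mul_comm, theta, map_sum, Finset.sum_mul]
    refine Finset.sum_congr rfl fun y hy => ?_
    rw [Finset.mul_sum]
    have hterm : ∀ x : Fin d → ℤ, (starRingEnd ℂ) ((wt N y : ℂ) * E y) * ((wt N x : ℂ) * E x) =
        ((wt N y * wt N x : ℝ) : ℂ) * (E x * (starRingEnd ℂ) (E y)) := by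
      intro x
      rw [map_mul, Complex.conj_ofReal]; push_cast; ring
    rw [Finset.sum_congr rfl fun x _ => hterm x]
    symm
    rw [← Finset.sum_image (s := box d (2 * N)) (g := fun u => y + u)
      (f := fun x => ((wt N y * wt N x : ℝ) : ℂ) * (E x * (starRingEnd ℂ) (E y)))
      (fun a _ b _ h => by simpa using h)]
    symm
    apply Finset.sum_subset
    · intro x hx
      refine Finset.mem_image.2 ⟨x - y, ?_, by simp⟩
      rw [mem_box] at hx hy ⊢
      intro i
      have := hx i
      have := hy i
      simp only [Pi.sub_apply]
      omega
    · intro x _ hx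
      rw [wt_eq_zero hx]; simp
  have hnorm : ‖theta Q M m N τ‖ ^ 2 ≤ ∑ u ∈ box d (2 * N), ‖∑ y ∈ box d N,
        ((wt N y * wt N (y + u) : ℝ) : ℂ) * (E (y + u) * (starRingEnd ℂ) (E y))‖ := by
    refine le_trans (le_of_eq ?_) (norm_sum_le _ _)
    rw [← hsq, Complex.norm_real, Real.norm_of_nonneg (by positivity)]
  refine hnorm.trans ?_
  rw [Finset.mul_sum]
  refine Finset.sum_le_sum fun u _ => ?_
  have hprod : ∑ y ∈ box d N,
        ((wt N y * wt N (y + u) : ℝ) : ℂ) * (E (y + u) * (starRingEnd ℂ) (E y)) =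
      Complex.exp ((τ * (quadForm Q (intVec u) - 2 * (Q.mulVec (intVec u) ⬝ᵥ M)) : ℝ) * Complex.I) *
      ∏ i, ∑ t ∈ Finset.Icc (-(N : ℤ)) N, ((tri N t * tri N (t + u i) : ℝ) : ℂ) *
        Complex.exp ((2 * Real.pi * (τ / Real.pi * Q.mulVec (intVec u) i) * t : ℝ) *
          Complex.I) := by
    rw [Finset.prod_univ_sum, Finset.mul_sum]
    refine Finset.sum_congr rfl fun y _ => ?_
    rw [hEE, Finset.prod_mul_distrib]
    have : ((wt N y * wt N (y + u) : ℝ) : ℂ) =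
        ∏ i, ((tri N (y i) * tri N (y i + u i) : ℝ) : ℂ) := by
      rw [wt, wt, ← Finset.prod_mul_distrib, Complex.ofReal_prod]; rfl
    rw [this]; ring
  rw [hprod, norm_mul, Complex.norm_exp_ofReal_mul_I, one_mul, norm_prod]
  have : (5 * N : ℝ) ^ d * ∏ i, 1 / (1 + (N * nrst (τ / Real.pi * Q.mulVec (intVec u) i)) ^ 2) =
      ∏ i, (5 * N : ℝ) * (1 / (1 + (N * nrst (τ / Real.pi * Q.mulVec (intVec u) i)) ^ 2)) := by
    rw [Finset.prod_mul_distrib, Finset.prod_const, Finset.card_univ, Fintype.card_fin]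
  rw [this]
  exact Finset.prod_le_prod (fun _ _ => norm_nonneg _) fun i _ => expsum hN _ _

lemma nrst_neg (x : ℝ) : nrst (-x) = nrst x := by
  have key : ∀ y : ℝ, nrst (-y) ≤ nrst y := by
    intro y
    have := round_le (-y) (-round y)
    rw [nrst, nrst]
    refine this.trans (le_of_eq ?_)
    rw [← abs_neg]; push_cast; ring_nf
  refine le_antisymm (key x) ?_
  simpa using key (-x)

lemma norm_intVec_le {d : ℕ} {N : ℕ} {u : Fin d → ℤ} (hu : u ∈ box d (2 * N)) :
    ‖intVec u‖ ≤ 2 * (N : ℝ) := by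
  rw [mem_box] at hu
  rw [pi_norm_le_iff_of_nonneg (by positivity)]
  intro i
  rw [intVec, Real.norm_eq_abs, abs_le]
  have := hu i
  constructor
  · exact_mod_cast this.1
  · exact_mod_cast this.2

/-- Outside the bad times at level `δ`, the theta sum is at most a constant times `(N / δ)^(d/2)`.
Here `P` agrees with `Q / π` up to the sign of each row, and signs do not affect distances to the
nearest integer. -/
lemma theta_bound {d : ℕ} {Q P : Matrix (Fin d) (Fin d) ℝ} (hQ : Q.IsSymm) {c0 C0 : ℝ}
    (hP : GoodForm P c0 C0)
    (hPQ : ∀ v i, P.mulVec v i = Q.mulVec v i / Real.pi ∨ P.mulVec v i = -(Q.mulVec v i / Real.pi))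
    {c : ℝ} (hc : 0 < c) (hc1 : c ≤ 1) (hc2 : 2 * (d * c ^ 2) < 1) :
    ∃ K > 0, ∀ (M : Fin d → ℝ) (m : ℝ) (N : ℕ) (T δ τ : ℝ), 0 < N → 0 < δ → δ ≤ c →
      τ ∈ Set.Icc (-T) T → τ ∉ Bad P T N δ → ‖theta Q M m N τ‖ ^ 2 ≤ K * (N / δ) ^ d := by
  obtain ⟨K, hK, h⟩ := cell_sum P hc hc1
  refine ⟨5 ^ d * K * (4 * c) ^ d, by positivity, ?_⟩
  intro M m N T δ τ hN hδ hδc hτ hτB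
  have hN' : (0 : ℝ) < N := by exact_mod_cast hN
  have h1 := h N τ ((4 * c / δ) ^ d) hN'
    (fun A hA => packing hP hN' hδ hδc hc2 hτ hτB A hA) (box d (2 * N))
    (fun u hu => norm_intVec_le hu)
  have h2 : ∀ u i, nrst (τ / Real.pi * Q.mulVec (intVec u) i) =
      nrst (τ * P.mulVec (intVec u) i) := by
    intro u i
    rcases hPQ (intVec u) i with h | h
    · rw [h]; congr 1; ring
    · rw [h, ← nrst_neg]; congr 1; ring
  refine (weyl hQ M m hN τ).trans ?_
  simp only [h2]
  calc _ ≤ (5 * N : ℝ) ^ d * (K * (4 * c / δ) ^ d) := by gcongr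
    _ = _ := by rw [div_pow, div_pow, mul_pow]; ring

/-! ### Mean value of the theta sum -/

lemma continuous_theta {d : ℕ} (Q : Matrix (Fin d) (Fin d) ℝ) (M : Fin d → ℝ) (m : ℝ) (N : ℕ) :
    Continuous (theta Q M m N) := by
  unfold theta
  fun_prop

/-- Integrating a function that is at most `ρ j` off the set `B j`, where the sets eventually
become empty: layer by layer, `B j` contributes `ρ (j + 1)` times its measure. -/
lemma layer_lintegral {T : ℝ} (g : ℝ → ENNReal) (ρ : ℕ → ENNReal) (B : ℕ → Set ℝ) (J : ℕ)
    (hJ : B J = ∅) (hg : ∀ j, ∀ τ ∈ Set.Icc (-T) T, τ ∉ B j → g τ ≤ ρ j) :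
    ∫⁻ τ in Set.Icc (-T) T, g τ ≤
      ρ 0 * ENNReal.ofReal (2 * T) + ∑ j ∈ Finset.range J, ρ (j + 1) * volume (B j) := by
  have hpt : ∀ τ ∈ Set.Icc (-T) T, g τ ≤
      ρ 0 + ∑ j ∈ Finset.range J, (toMeasurable volume (B j)).indicator (fun _ => ρ (j + 1)) τ := by
    intro τ hτ
    classical
    have hex : ∃ j, τ ∉ B j := ⟨J, by simp [hJ]⟩
    have hs := Nat.find_spec hex
    have hle : Nat.find hex ≤ J := Nat.find_min' hex (by simp [hJ])
    have hgb := hg _ τ hτ hs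
    rcases hk : Nat.find hex with _ | k
    · rw [hk] at hgb
      exact hgb.trans le_self_add
    · have hkB : τ ∈ B k := by
        by_contra h
        have := Nat.find_min' hex h
        omega
      rw [hk] at hgb hle
      refine hgb.trans (le_trans ?_ le_add_self)
      refine le_trans ?_ (Finset.single_le_sum (f := fun j =>
        (toMeasurable volume (B j)).indicator (fun _ => ρ (j + 1)) τ)
        (fun _ _ => zero_le) (Finset.mem_range.2 hle))
      simp only [Set.indicator_of_mem (subset_toMeasurable volume _ hkB), le_refl]
  refine (setLIntegral_mono' measurableSet_Icc hpt).trans ?_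
  rw [lintegral_add_left measurable_const, lintegral_finsetSum]
  · rw [setLIntegral_const, Real.volume_Icc]
    gcongr with j hj
    · apply le_of_eq; ring
    · rw [lintegral_indicator (measurableSet_toMeasurable _ _), setLIntegral_const]
      exact mul_le_mul_right ((Measure.restrict_apply_le _ _).trans (measure_toMeasurable _).le) _
  · intro j _
    exact measurable_const.indicator (measurableSet_toMeasurable _ _)

/-- The mean value of the theta sum over a fixed time window is `O(N^(d-2))`. This is where
`d ≥ 5` enters: the dyadic sum over the levels of bad times is geometric with ratio
`2^(d/2-2) > 1`, hence controlled by its last term. -/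
lemma theta_integral {d : ℕ} (hd : 5 ≤ d) {Q P : Matrix (Fin d) (Fin d) ℝ} (hQ : Q.IsSymm)
    {c0 C0 : ℝ} (hP : GoodForm P c0 C0)
    (hPQ : ∀ v i, P.mulVec v i = Q.mulVec v i / Real.pi ∨ P.mulVec v i = -(Q.mulVec v i / Real.pi))
    {T : ℝ} (hT : 0 < T) :
    ∃ C > 0, ∀ (M : Fin d → ℝ) (m : ℝ) (N : ℕ), 0 < N →
      ∫ τ in Set.Icc (-T) T, ‖theta Q M m N τ‖ ≤ C * (N : ℝ) ^ (d - 2) := by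
  obtain ⟨cb, hcb, Cb, hCb, hbad⟩ := bad_volume hP (by omega) hT
  have hd0 : (5 : ℝ) ≤ d := by exact_mod_cast hd
  set c := min cb (1 / (2 * d)) with hc_def
  have hc : 0 < c := lt_min hcb (by positivity)
  have hcd : c ≤ 1 / (2 * d) := min_le_right _ _
  have hc1 : c ≤ 1 := hcd.trans (by rw [div_le_one (by positivity)]; linarith)
  have hc2 : 2 * (d * c ^ 2) < 1 := by
    have : c * (2 * d) ≤ 1 := by rwa [le_div_iff₀ (by positivity)] at hcd
    have h3 : c ≤ 1 / 10 := hcd.trans (by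
      rw [div_le_div_iff₀ (by positivity) (by norm_num)]; linarith)
    nlinarith
  obtain ⟨K, hK, hth⟩ := theta_bound hQ hP hPQ hc hc1 hc2
  -- Halving `δ` multiplies the bound for `|θ|` by `G` and the measure of the bad set by `1 / 4`, so
  -- `G > 4`, that is `d ≥ 5`, is what makes the sum over the levels geometrically increasing.
  set G := Real.sqrt (2 ^ d) with hG
  have hG5 : 5 ≤ G := by
    apply Real.le_sqrt_of_sq_le
    calc (5 : ℝ) ^ 2 ≤ 2 ^ 5 := by norm_num
      _ ≤ 2 ^ d := pow_le_pow_right₀ (by norm_num) hd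
  obtain ⟨n, rfl⟩ : ∃ n, d = n + 4 := ⟨d - 4, by omega⟩
  refine ⟨Real.sqrt (K / c ^ (n + 4)) *
    (2 * T + G * c ^ 2 * Cb * (Real.sqrt (2 ^ n) / (G / 4 - 1))), ?_, ?_⟩
  · have : 0 < G / 4 - 1 := by linarith
    positivity
  intro M m N hN
  have hN' : (0 : ℝ) < N := by exact_mod_cast hN
  have hN1 : (1 : ℝ) ≤ N := by exact_mod_cast hN
  set A := Real.sqrt (K * (N / c) ^ (n + 4)) with hA
  set ρ : ℕ → ℝ := fun j => A * G ^ j with hρ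
  -- At level `J` the radius `c / 2 ^ J` is below `1 / N`, where there are no bad times left.
  set J := Nat.log 2 N + 1 with hJ
  have hJ1 : (N : ℝ) < 2 ^ J := by exact_mod_cast Nat.lt_pow_succ_log_self (by norm_num) N
  have hJ2 : (2 : ℝ) ^ J ≤ 2 * N := by
    have : 2 ^ Nat.log 2 N ≤ N := Nat.pow_log_le_self 2 (by omega)
    have : (2 : ℝ) ^ Nat.log 2 N ≤ N := by exact_mod_cast this
    rw [hJ, pow_succ]; linarith
  clear_value J
  have hδ : ∀ j : ℕ, 0 < c / 2 ^ j ∧ c / 2 ^ j ≤ c := fun j =>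
    ⟨by positivity, div_le_self hc.le (one_le_pow₀ (by norm_num))⟩
  have hpt : ∀ j : ℕ, ∀ τ ∈ Set.Icc (-T) T, τ ∉ Bad P T N (c / 2 ^ j) →
      ENNReal.ofReal ‖theta Q M m N τ‖ ≤ ENNReal.ofReal (ρ j) := by
    intro j τ hτ hτB
    apply ENNReal.ofReal_le_ofReal
    refine le_of_le_of_eq (Real.le_sqrt_of_sq_le
      (hth M m N T (c / 2 ^ j) τ hN (hδ j).1 (hδ j).2 hτ hτB)) ?_
    have h1 : K * (N / (c / 2 ^ j)) ^ (n + 4) = K * (N / c) ^ (n + 4) * (2 ^ (n + 4)) ^ j := by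
      rw [div_div_eq_mul_div, mul_div_right_comm, mul_pow, ← pow_mul, ← pow_mul, mul_comm j]; ring
    have h2 : Real.sqrt ((2 ^ (n + 4)) ^ j) = G ^ j := by
      rw [Real.sqrt_eq_iff_mul_self_eq (by positivity) (by positivity), ← mul_pow,
        Real.mul_self_sqrt (by positivity)]
    rw [h1, Real.sqrt_mul (by positivity), h2]
  have hlay := layer_lintegral (T := T) (fun τ => ENNReal.ofReal ‖theta Q M m N τ‖)
    (fun j => ENNReal.ofReal (ρ j)) (fun j => Bad P T N (c / 2 ^ j)) J
    (bad_empty P (by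
      rw [div_mul_eq_mul_div, div_lt_one (by positivity)]
      nlinarith)) hpt
  have hint : Integrable (fun τ => ‖theta Q M m N τ‖) (volume.restrict (Set.Icc (-T) T)) :=
    ((continuous_theta Q M m N).norm.continuousOn).integrableOn_compact isCompact_Icc
  rw [← ofReal_integral_eq_lintegral_ofReal hint (Eventually.of_forall fun _ => norm_nonneg _)]
    at hlay
  have hA0 : 0 ≤ A := Real.sqrt_nonneg _
  have hρ0 : ∀ j, 0 ≤ ρ j := fun j => by positivity
  have hterm : ∀ j ∈ Finset.range J, ENNReal.ofReal (ρ (j + 1)) * volume (Bad P T N (c / 2 ^ j)) ≤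
      ENNReal.ofReal (A * (G * c ^ 2 * Cb) * (G / 4) ^ j) := by
    intro j _
    have := hbad N (c / 2 ^ j) hN1 (hδ j).1 ((hδ j).2.trans (min_le_left _ _))
    refine (mul_le_mul_right this _).trans ?_
    rw [← ENNReal.ofReal_mul (hρ0 _)]
    apply le_of_eq
    congr 1
    simp only [hρ]
    rw [div_pow, div_pow, show (4 : ℝ) ^ j = (2 ^ j) ^ 2 by rw [← pow_mul, mul_comm, pow_mul]; norm_num]
    rw [pow_succ]; ring
  have hq : 1 < G / 4 := by linarith
  have hqJ : (G / 4) ^ J ≤ Real.sqrt (2 ^ n) * Real.sqrt (N ^ n) := by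
    rw [← Real.sqrt_mul (by positivity), ← mul_pow]
    apply Real.le_sqrt_of_sq_le
    have : ((G / 4) ^ J) ^ 2 = (2 ^ J) ^ n := by
      calc ((G / 4) ^ J) ^ 2 = (G ^ 2 / 16) ^ J := by
            rw [← pow_mul, mul_comm, pow_mul, div_pow]; norm_num
        _ = (2 ^ n) ^ J := by rw [hG, Real.sq_sqrt (by positivity), pow_add]; norm_num
        _ = (2 ^ J) ^ n := by rw [← pow_mul, ← pow_mul, mul_comm]
    rw [this]
    gcongr
  have hsum : ∑ j ∈ Finset.range J, A * (G * c ^ 2 * Cb) * (G / 4) ^ j ≤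
      A * (G * c ^ 2 * Cb) * (Real.sqrt (2 ^ n) * Real.sqrt (N ^ n) / (G / 4 - 1)) := by
    rw [← Finset.mul_sum, geom_sum_eq hq.ne']
    have : 0 < G / 4 - 1 := by linarith
    gcongr
    linarith
  have htot : ∫ τ in Set.Icc (-T) T, ‖theta Q M m N τ‖ ≤ A * (2 * T) +
      A * (G * c ^ 2 * Cb) * (Real.sqrt (2 ^ n) * Real.sqrt (N ^ n) / (G / 4 - 1)) := by
    have hpos : 0 ≤ A * (2 * T) +
      A * (G * c ^ 2 * Cb) * (Real.sqrt (2 ^ n) * Real.sqrt (N ^ n) / (G / 4 - 1)) := by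
      have : 0 < G / 4 - 1 := by linarith
      positivity
    rw [← ENNReal.ofReal_le_ofReal_iff hpos]
    refine hlay.trans ((add_le_add le_rfl (Finset.sum_le_sum hterm)).trans ?_)
    rw [← ENNReal.ofReal_sum_of_nonneg (fun j _ => by positivity),
      ← ENNReal.ofReal_mul (hρ0 _), ← ENNReal.ofReal_add (by positivity)
        (Finset.sum_nonneg fun j _ => by positivity)]
    apply ENNReal.ofReal_le_ofReal
    simp only [hρ, pow_zero, mul_one]
    linarith
  have hs1 : 1 ≤ Real.sqrt (N ^ n) := by
    rw [Real.one_le_sqrt]; exact one_le_pow₀ hN1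
  have hAN : A * Real.sqrt (N ^ n) = Real.sqrt (K / c ^ (n + 4)) * (N : ℝ) ^ (n + 4 - 2) := by
    rw [hA, ← Real.sqrt_mul (by positivity)]
    have : K * (N / c) ^ (n + 4) * N ^ n = K / c ^ (n + 4) * ((N : ℝ) ^ (n + 4 - 2)) ^ 2 := by
      rw [← pow_mul, show (n + 4 - 2) * 2 = (n + 4) + n by omega, pow_add, div_pow]; ring
    rw [this, Real.sqrt_mul (by positivity), Real.sqrt_sq (by positivity)]
  refine htot.trans ?_
  calc _ ≤ A * Real.sqrt (N ^ n) * (2 * T) +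
      A * (G * c ^ 2 * Cb) * (Real.sqrt (2 ^ n) * Real.sqrt (N ^ n) / (G / 4 - 1)) := by
        gcongr
        exact le_mul_of_one_le_right hA0 hs1
    _ = A * Real.sqrt (N ^ n) *
      (2 * T + G * c ^ 2 * Cb * (Real.sqrt (2 ^ n) / (G / 4 - 1))) := by ring
    _ = _ := by rw [hAN]; ring

/-! ### Upper bound for the number of lattice points -/

/-- Fejér-type smoothing: a weighted sum of the squares `|∫₀ᵀ exp(iτy)dτ|²` is controlled by the
mean value of the corresponding exponential sum over `[-T, T]`. -/
lemma fejer_sum {ι : Type*} (s : Finset ι) (w y : ι → ℝ) {T : ℝ} (hT : 0 < T) :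
    ∑ x ∈ s, w x * ‖∫ τ in (0 : ℝ)..T, Complex.exp ((τ * y x : ℝ) * Complex.I)‖ ^ 2 ≤
      T * ∫ τ in Set.Icc (-T) T,
        ‖∑ x ∈ s, (w x : ℂ) * Complex.exp ((τ * y x : ℝ) * Complex.I)‖ := by
  set F : ℝ → ℂ := fun τ => ∑ x ∈ s, (w x : ℂ) * Complex.exp ((τ * y x : ℝ) * Complex.I) with hF
  have hFc : Continuous F := by simp only [hF]; fun_prop
  set z : ι → ℂ := fun x => ∫ τ in (0 : ℝ)..T, Complex.exp ((τ * y x : ℝ) * Complex.I) with hz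
  have hconj : ∀ x, ∫ σ in (0 : ℝ)..T, Complex.exp ((-σ * y x : ℝ) * Complex.I) =
      (starRingEnd ℂ) (z x) := by
    intro x
    simp only [hz]
    rw [intervalIntegral.integral_of_le hT.le, intervalIntegral.integral_of_le hT.le,
      ← integral_conj]
    congr 1
    ext σ
    rw [← Complex.exp_conj, map_mul, Complex.conj_ofReal, Complex.conj_I]
    congr 1
    push_cast; ring
  have hinner : ∀ τ : ℝ, ∫ σ in (0 : ℝ)..T, F (τ - σ) =
      ∑ x ∈ s, ((w x : ℂ) * (starRingEnd ℂ) (z x)) * Complex.exp ((τ * y x : ℝ) * Complex.I) := by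
    intro τ
    have : ∀ σ : ℝ, F (τ - σ) = ∑ x ∈ s, ((w x : ℂ) * Complex.exp ((τ * y x : ℝ) * Complex.I)) *
        Complex.exp ((-σ * y x : ℝ) * Complex.I) := by
      intro σ
      refine Finset.sum_congr rfl fun x _ => ?_
      rw [mul_assoc, ← Complex.exp_add]
      congr 2
      push_cast; ring
    simp only [this]
    rw [intervalIntegral.integral_finsetSum]
    · refine Finset.sum_congr rfl fun x _ => ?_
      rw [intervalIntegral.integral_const_mul, hconj]; ring
    · intro x _
      apply Continuous.intervalIntegrable
      fun_prop
  have houter : ((∑ x ∈ s, w x * ‖z x‖ ^ 2 : ℝ) : ℂ) =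
      ∫ τ in (0 : ℝ)..T, ∫ σ in (0 : ℝ)..T, F (τ - σ) := by
    simp only [hinner]
    rw [intervalIntegral.integral_finsetSum]
    · rw [Complex.ofReal_sum]
      refine Finset.sum_congr rfl fun x _ => ?_
      rw [intervalIntegral.integral_const_mul, ← Complex.normSq_eq_norm_sq, Complex.ofReal_mul,
        ← Complex.mul_conj]
      ring
    · intro x _
      apply Continuous.intervalIntegrable
      fun_prop
  have hbd : ∀ τ ∈ Set.uIoc 0 T, ‖∫ σ in (0 : ℝ)..T, F (τ - σ)‖ ≤
      ∫ τ in Set.Icc (-T) T, ‖F τ‖ := by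
    intro τ hτ
    rw [Set.uIoc_of_le hT.le] at hτ
    refine (intervalIntegral.norm_integral_le_integral_norm hT.le).trans ?_
    rw [intervalIntegral.integral_comp_sub_left (fun t => ‖F t‖) τ, sub_zero,
      intervalIntegral.integral_of_le (by linarith)]
    apply setIntegral_mono_set
    · exact hFc.norm.continuousOn.integrableOn_compact isCompact_Icc
    · exact Eventually.of_forall fun _ => norm_nonneg _
    · apply LE.le.eventuallyLE
      intro t ht
      exact ⟨by linarith [ht.1, hτ.1], ht.2.trans hτ.2⟩
  have hfin := intervalIntegral.norm_integral_le_of_norm_le_const hbd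
  rw [← houter, Complex.norm_real, sub_zero, abs_of_pos hT, mul_comm] at hfin
  exact (le_abs_self _).trans hfin

lemma half_le_norm_integral {T y : ℝ} (hT : 0 < T) (h : T * |y| ≤ 1) :
    T / 2 ≤ ‖∫ τ in (0 : ℝ)..T, Complex.exp ((τ * y : ℝ) * Complex.I)‖ := by
  have hre : (∫ τ in (0 : ℝ)..T, Complex.exp ((τ * y : ℝ) * Complex.I)).re =
      ∫ τ in (0 : ℝ)..T, Real.cos (τ * y) := by
    have := Complex.reCLM.intervalIntegral_comp_comm (a := 0) (b := T) (μ := volume)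
      (f := fun τ : ℝ => Complex.exp ((τ * y : ℝ) * Complex.I))
      (Continuous.intervalIntegrable (by fun_prop) _ _)
    simp only [Complex.reCLM_apply, Complex.exp_ofReal_mul_I_re] at this
    exact this.symm
  refine le_trans ?_ ((le_abs_self _).trans (Complex.abs_re_le_norm _))
  rw [hre]
  have h1 : ∫ _ in (0 : ℝ)..T, (1 / 2 : ℝ) = T / 2 := by
    rw [intervalIntegral.integral_const]; simp; ring
  rw [← h1]
  apply intervalIntegral.integral_mono_on hT.le
  · exact intervalIntegrable_const
  · exact Continuous.intervalIntegrable (by fun_prop) _ _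
  · intro τ hτ
    have h2 : |τ * y| ≤ 1 := by
      rw [abs_mul, abs_of_nonneg hτ.1]
      exact (mul_le_mul_of_nonneg_right hτ.2 (abs_nonneg _)).trans h
    have h3 : (τ * y) ^ 2 ≤ 1 := by rw [← sq_abs]; exact pow_le_one₀ (abs_nonneg _) h2
    linarith [Real.one_sub_sq_div_two_le_cos (x := τ * y)]

lemma half_pow_le_wt {d N : ℕ} (hN : 0 < N) {r : ℝ} (hr : 2 * r ≤ N) {x : Fin d → ℤ}
    (hx : ‖intVec x‖ ≤ r) : (1 / 2 : ℝ) ^ d ≤ wt N x := by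
  have : (1 / 2 : ℝ) ^ d = ∏ _i : Fin d, (1 / 2 : ℝ) := by simp
  rw [this, wt]
  refine Finset.prod_le_prod (fun _ _ => by norm_num) fun i _ => ?_
  have hi : |(x i : ℝ)| ≤ r := (norm_le_pi_norm (intVec x) i).trans hx
  rw [abs_le] at hi
  apply half_le_tri hN
  · have : (2 * x i : ℝ) ≤ N := by linarith
    exact_mod_cast this
  · have : (-(2 * x i) : ℝ) ≤ N := by linarith
    exact_mod_cast this

/-- Upper bound `O(r^(d-2))` for the number of lattice points. -/
lemma count_bound {d : ℕ} (hd : 5 ≤ d) {Q P : Matrix (Fin d) (Fin d) ℝ} (hQ : Q.IsSymm)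
    {c0 C0 : ℝ} (hP : GoodForm P c0 C0)
    (hPQ : ∀ v i, P.mulVec v i = Q.mulVec v i / Real.pi ∨ P.mulVec v i = -(Q.mulVec v i / Real.pi))
    {a b : ℝ} (hab : a < b) (M : Fin d → ℝ) :
    ∃ C > 0, ∀ r ≥ 1, (latticeCount (Hset Q a b M r) : ℝ) ≤ C * r ^ (d - 2) := by
  set m := (a + b) / 2 with hm
  set h := (b - a) / 2 with hh
  have hh0 : 0 < h := by rw [hh]; linarith
  -- With `T h = 1`, every `y` with `|y| ≤ h` satisfies `|∫₀ᵀ exp(iτy)dτ| ≥ T / 2`.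
  set T := 1 / h with hT_def
  have hT : 0 < T := by positivity
  obtain ⟨C, hC, hint⟩ := theta_integral hd hQ hP hPQ hT
  refine ⟨2 ^ d * (4 / T) * (C * 3 ^ (d - 2)), by positivity, ?_⟩
  intro r hr
  set N := ⌈2 * r⌉₊ with hN_def
  have hN1 : 2 * r ≤ N := Nat.le_ceil _
  have hN2 : (N : ℝ) ≤ 3 * r := by
    have := Nat.ceil_lt_add_one (a := 2 * r) (by linarith)
    rw [hN_def]; linarith
  have hN : 0 < N := Nat.ceil_pos.2 (by linarith)
  set y : (Fin d → ℤ) → ℝ := fun x => quadForm Q (intVec x - M) - m with hy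
  classical
  set S := (box d N).filter fun x => |y x| ≤ h ∧ ‖intVec x‖ ≤ r with hS
  have hcard : latticeCount (Hset Q a b M r) ≤ S.card := by
    rw [latticeCount]
    refine le_trans (Set.ncard_le_ncard (t := ((S.image intVec : Finset (Fin d → ℝ)) : Set _))
      ?_ (Finset.finite_toSet _)) ?_
    · rintro _ ⟨⟨⟨h1, h2⟩, h3⟩, x, rfl⟩
      rw [Finset.mem_coe]
      refine Finset.mem_image_of_mem _ (Finset.mem_filter.2 ⟨?_, ?_, h3⟩)
      · rw [mem_box]
        intro i
        have hi : |(x i : ℝ)| ≤ r := (norm_le_pi_norm (intVec x) i).trans h3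
        rw [abs_le] at hi
        constructor
        · have : (-N : ℝ) ≤ x i := by linarith
          exact_mod_cast this
        · have : (x i : ℝ) ≤ N := by linarith
          exact_mod_cast this
      · simp only [hy, hm, hh, abs_le]
        constructor <;> linarith
    · rw [Set.ncard_coe_finset]; exact Finset.card_image_le
  have hlow : (S.card : ℝ) * ((1 / 2) ^ d * (T / 2) ^ 2) ≤
      ∑ x ∈ box d N, wt N x *
        ‖∫ τ in (0 : ℝ)..T, Complex.exp ((τ * y x : ℝ) * Complex.I)‖ ^ 2 := by
    rw [← nsmul_eq_mul, ← Finset.sum_const]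
    refine (Finset.sum_le_sum fun x hx => ?_).trans (Finset.sum_le_sum_of_subset_of_nonneg
      (Finset.filter_subset _ _) fun x _ _ => mul_nonneg (wt_nonneg _ _) (sq_nonneg _))
    obtain ⟨-, hx1, hx2⟩ := Finset.mem_filter.1 hx
    have h1 := half_pow_le_wt hN hN1 hx2
    have h2 : T * |y x| ≤ 1 := by
      rw [hT_def, one_div_mul_eq_div, div_le_one hh0]; exact hx1
    have h3 := half_le_norm_integral hT h2
    have := wt_nonneg N x
    gcongr
  have hup := (hlow.trans (fejer_sum (box d N) (wt N) y hT)).trans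
    (mul_le_mul_of_nonneg_left (hint M m N hN) hT.le)
  have hNr : (N : ℝ) ^ (d - 2) ≤ 3 ^ (d - 2) * r ^ (d - 2) := by
    rw [← mul_pow]; gcongr
  have hS1 : (S.card : ℝ) = (S.card : ℝ) * ((1 / 2) ^ d * (T / 2) ^ 2) * (2 ^ d * (4 / T ^ 2)) := by
    rw [div_pow 1 2 d]; field_simp; norm_num
  calc (latticeCount (Hset Q a b M r) : ℝ) ≤ S.card := by exact_mod_cast hcard
    _ = (S.card : ℝ) * ((1 / 2) ^ d * (T / 2) ^ 2) * (2 ^ d * (4 / T ^ 2)) := hS1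
    _ ≤ T * (C * N ^ (d - 2)) * (2 ^ d * (4 / T ^ 2)) := by gcongr
    _ ≤ T * (C * (3 ^ (d - 2) * r ^ (d - 2))) * (2 ^ d * (4 / T ^ 2)) := by gcongr
    _ = _ := by field_simp

/-! ### Lower bound for the volume -/

lemma exists_bilin_bound {d : ℕ} (Q : Matrix (Fin d) (Fin d) ℝ) :
    ∃ B > 0, ∀ x y : Fin d → ℝ, |Q.mulVec x ⬝ᵥ y| ≤ B * ‖x‖ * ‖y‖ := by
  refine ⟨∑ i, ∑ j, |Q i j| + 1, by positivity, ?_⟩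
  intro x y
  have h1 : |Q.mulVec x ⬝ᵥ y| ≤ (∑ i, ∑ j, |Q i j|) * ‖x‖ * ‖y‖ := by
    rw [dotProduct, Finset.sum_mul, Finset.sum_mul]
    refine (Finset.abs_sum_le_sum_abs _ _).trans (Finset.sum_le_sum fun i _ => ?_)
    rw [abs_mul]
    have hy : |y i| ≤ ‖y‖ := norm_le_pi_norm y i
    refine mul_le_mul ?_ hy (abs_nonneg _) (by positivity)
    rw [Matrix.mulVec, dotProduct, Finset.sum_mul]
    refine (Finset.abs_sum_le_sum_abs _ _).trans (Finset.sum_le_sum fun j _ => ?_)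
    rw [abs_mul]
    have hx : |x j| ≤ ‖x‖ := norm_le_pi_norm x j
    gcongr
  refine h1.trans ?_
  gcongr
  linarith

lemma continuous_quadForm {d : ℕ} (Q : Matrix (Fin d) (Fin d) ℝ) : Continuous (quadForm Q) := by
  unfold quadForm Matrix.mulVec dotProduct
  fun_prop

lemma measurableSet_Hset {d : ℕ} (Q : Matrix (Fin d) (Fin d) ℝ) (a b : ℝ) (M : Fin d → ℝ) (r : ℝ) :
    MeasurableSet (Hset Q a b M r) := by
  have hc : Continuous fun x : Fin d → ℝ => quadForm Q (x - M) :=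
    (continuous_quadForm Q).comp (continuous_id.sub continuous_const)
  exact (((isClosed_le continuous_const hc).inter (isClosed_le hc continuous_const)).inter
    (isClosed_le continuous_norm continuous_const)).measurableSet

lemma volume_Hset_lt_top {d : ℕ} (Q : Matrix (Fin d) (Fin d) ℝ) (a b : ℝ) (M : Fin d → ℝ) (r : ℝ) :
    volume (Hset Q a b M r) < ⊤ := by
  refine (measure_mono (t := Metric.closedBall 0 r) ?_).trans_lt measure_closedBall_lt_top
  intro x hx
  rw [mem_closedBall_zero_iff]
  exact hx.2

/-- If every line segment `y + s e`, `|s| ≤ r`, issuing from a point `y ∈ V` spends time at least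
`ℓ` in `H`, then `H` has volume at least `ℓ vol(V) / (2r)`: average the translates of `H`. -/
lemma volume_ge_of_lines {d : ℕ} {H V : Set (Fin d → ℝ)} (hH : MeasurableSet H)
    (hV : MeasurableSet V) (e : Fin d → ℝ) (r : ℝ) (ℓ : ENNReal)
    (h : ∀ y ∈ V, ℓ ≤ volume (Set.Icc (-r) r ∩ {s : ℝ | y + s • e ∈ H})) :
    ℓ * volume V ≤ ENNReal.ofReal (2 * r) * volume H := by
  have hmeas : Measurable fun p : (Fin d → ℝ) × ℝ => H.indicator (fun _ => (1 : ENNReal))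
      (p.1 + p.2 • e) :=
    (measurable_const.indicator hH).comp (by fun_prop)
  have hline : ∀ y : Fin d → ℝ, MeasurableSet {s : ℝ | y + s • e ∈ H} := fun y =>
    (show Measurable fun s : ℝ => y + s • e by fun_prop) hH
  calc ℓ * volume V = ∫⁻ _ in V, ℓ := by rw [setLIntegral_const]
    _ ≤ ∫⁻ y in V, ∫⁻ s in Set.Icc (-r) r, H.indicator (fun _ => (1 : ENNReal)) (y + s • e) := by
        refine setLIntegral_mono' hV fun y hy => (h y hy).trans (le_of_eq ?_)
        have : (fun s : ℝ => H.indicator (fun _ => (1 : ENNReal)) (y + s • e)) =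
            {s : ℝ | y + s • e ∈ H}.indicator fun _ => 1 := by
          rfl
        rw [this, lintegral_indicator (hline y), setLIntegral_const, one_mul,
          Measure.restrict_apply (hline y), Set.inter_comm]
    _ = ∫⁻ s in Set.Icc (-r) r, ∫⁻ y in V, H.indicator (fun _ => (1 : ENNReal)) (y + s • e) :=
        lintegral_lintegral_swap hmeas.aemeasurable
    _ ≤ ∫⁻ _ in Set.Icc (-r) r, volume H := by
        refine lintegral_mono fun s => ?_
        refine (setLIntegral_le_lintegral _ _).trans (le_of_eq ?_)
        rw [lintegral_add_right_eq_self (fun y => H.indicator (fun _ => (1 : ENNReal)) y) (s • e),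
          lintegral_indicator hH, setLIntegral_const, one_mul]
    _ = _ := by
        rw [setLIntegral_const, Real.volume_Icc, mul_comm]; congr 2; ring

lemma quadForm_smul {d : ℕ} (Q : Matrix (Fin d) (Fin d) ℝ) (k : ℝ) (v : Fin d → ℝ) :
    quadForm Q (k • v) = k ^ 2 * quadForm Q v := by
  change Q.mulVec (k • v) ⬝ᵥ (k • v) = k ^ 2 * (Q.mulVec v ⬝ᵥ v)
  rw [Matrix.mulVec_smul, smul_dotProduct, dotProduct_smul]
  simp only [smul_eq_mul]; ring

lemma mul_mul_le {B x y X Y : ℝ} (hB : 0 ≤ B) (hx : 0 ≤ x) (hxX : x ≤ X) (hy : 0 ≤ y)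
    (hyY : y ≤ Y) : B * x * y ≤ B * X * Y :=
  mul_le_mul (mul_le_mul_of_nonneg_left hxX hB) hyY hy (mul_nonneg hB (hx.trans hxX))

/-- A segment in direction `e` through a point near `M + r y₀`, along which the form is close to
`σ² ((r + s)² - r²)`, crosses the shell by the intermediate value theorem, and stays inside for
time `(b - a) / (B r)` because the form is `B r`-Lipschitz along it. -/
lemma line_crossing {d : ℕ} {Q : Matrix (Fin d) (Fin d) ℝ} (hQ : Q.IsSymm) {B σ η r t a b : ℝ}
    (hB : 0 < B) (hBQ : ∀ x y : Fin d → ℝ, |Q.mulVec x ⬝ᵥ y| ≤ B * ‖x‖ * ‖y‖)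
    {M e y0 : Fin d → ℝ} (hen : ‖e‖ ≤ 1 / 4) (hy0n : ‖y0‖ ≤ 1 / 4) (hη1 : η ≤ 1 / 4)
    (hη2 : 6 * B * η ≤ σ ^ 2) (hr0 : 0 < r) (hM : ‖M‖ ≤ r / 4)
    (hrab : |a| + |b| ≤ σ ^ 2 / 4 * r ^ 2) (ht_def : t = (b - a) / (2 * (B * r)))
    (htr : t ≤ r / 2) (ht : 0 < t)
    (hv0 : ∀ s : ℝ, quadForm Q (r • y0 + s • e) = σ ^ 2 * ((r + s) ^ 2 - r ^ 2))
    (y : Fin d → ℝ) (hy : y ∈ Metric.ball (M + r • y0) (η * r)) :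
    ENNReal.ofReal (2 * t) ≤
      volume (Set.Icc (-r) r ∩ {s : ℝ | y + s • e ∈ Hset Q a b M r}) := by
  have hqB : ∀ v : Fin d → ℝ, |quadForm Q v| ≤ B * ‖v‖ * ‖v‖ := fun v => hBQ v v
  set w := y - (M + r • y0) with hw
  have hwn : ‖w‖ ≤ η * r := by
    rw [mem_ball_iff_norm] at hy; exact hy.le
  have hry : ‖r • y0‖ ≤ r / 4 := by
    rw [norm_smul, Real.norm_of_nonneg hr0.le]; nlinarith
  have hse : ∀ s ∈ Set.Icc (-r) r, ‖s • e‖ ≤ r / 4 := by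
    intro s hs
    rw [norm_smul]
    have : ‖s‖ ≤ r := abs_le.2 hs
    nlinarith [norm_nonneg e, norm_nonneg s]
  have hwr : ‖w‖ ≤ r / 4 := hwn.trans (by nlinarith)
  set f : ℝ → ℝ := fun s => quadForm Q (y - M + s • e) with hf
  have hv1 : y - M = r • y0 + w := by rw [hw]; abel
  have hv1n : ‖y - M‖ ≤ r / 2 := by
    rw [hv1]; linarith [norm_add_le (r • y0) w]
  have hpert : ∀ s ∈ Set.Icc (-r) r,
      |f s - σ ^ 2 * ((r + s) ^ 2 - r ^ 2)| ≤ σ ^ 2 / 2 * r ^ 2 := by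
    intro s hs
    have h1 : f s = quadForm Q ((r • y0 + s • e) + w) := by
      simp only [hf, hv1]; congr 1; abel
    have hn : ‖r • y0 + s • e‖ ≤ r := by
      linarith [norm_add_le (r • y0) (s • e), hse s hs]
    rw [h1, quadForm_add hQ, hv0]
    have h2 := hBQ w (r • y0 + s • e)
    have h3 := hqB w
    have h4 : B * ‖w‖ * ‖r • y0 + s • e‖ ≤ B * (η * r) * r :=
        mul_mul_le hB.le (norm_nonneg _) hwn (norm_nonneg _) hn
    have h5 : B * ‖w‖ * ‖w‖ ≤ B * (η * r) * r :=
        mul_mul_le hB.le (norm_nonneg _) hwn (norm_nonneg _) (by linarith)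
    have h6 : B * (η * r) * r ≤ σ ^ 2 / 6 * r ^ 2 := by nlinarith [sq_nonneg r]
    rw [abs_le] at h2 h3 ⊢
    constructor <;> linarith
  have hfc : Continuous f := (continuous_quadForm Q).comp (by fun_prop)
  have hlo : f (-(r / 2)) ≤ (a + b) / 2 := by
    have := hpert (-(r / 2)) ⟨by linarith, by linarith⟩
    rw [abs_le] at this
    have h2 := neg_abs_le a
    have h3 := neg_abs_le b
    nlinarith [abs_nonneg a, abs_nonneg b]
  have hhi : (a + b) / 2 ≤ f (r / 2) := by
    have := hpert (r / 2) ⟨by linarith, by linarith⟩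
    rw [abs_le] at this
    have h2 := le_abs_self a
    have h3 := le_abs_self b
    nlinarith [abs_nonneg a, abs_nonneg b]
  obtain ⟨s1, hs1, hfs1⟩ := intermediate_value_Icc (a := -(r / 2)) (b := r / 2) (by linarith)
    hfc.continuousOn ⟨hlo, hhi⟩
  have hlip : ∀ s ∈ Set.Icc (-r) r, ∀ s' ∈ Set.Icc (-r) r, |f s - f s'| ≤ B * r * |s - s'| := by
    intro s hs s' hs'
    have h1 : ∀ s, f s = quadForm Q (y - M) + 2 * (s * (Q.mulVec e ⬝ᵥ (y - M))) +
        s ^ 2 * quadForm Q e := by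
      intro s
      simp only [hf]
      rw [quadForm_add hQ, quadForm_smul, Matrix.mulVec_smul, smul_dotProduct, smul_eq_mul]
    have h2 : f s - f s' = (2 * (Q.mulVec e ⬝ᵥ (y - M)) + (s + s') * quadForm Q e) * (s - s') := by
      rw [h1, h1]; ring
    rw [h2, abs_mul]
    refine mul_le_mul_of_nonneg_right ?_ (abs_nonneg _)
    have h3 : |Q.mulVec e ⬝ᵥ (y - M)| ≤ B * (1 / 4) * (r / 2) := (hBQ _ _).trans
        (mul_mul_le hB.le (norm_nonneg _) hen (norm_nonneg _) hv1n)
    have h4 : |quadForm Q e| ≤ B * (1 / 4) * (1 / 4) := (hqB e).trans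
        (mul_mul_le hB.le (norm_nonneg _) hen (norm_nonneg _) hen)
    have h5 : |s + s'| ≤ 2 * r := by
      rw [abs_le]; constructor <;> linarith [hs.1, hs.2, hs'.1, hs'.2]
    calc _ ≤ 2 * |Q.mulVec e ⬝ᵥ (y - M)| + |s + s'| * |quadForm Q e| := by
          refine (abs_add_le _ _).trans (le_of_eq ?_)
          rw [abs_mul, abs_mul, abs_two]
      _ ≤ 2 * (B * (1 / 4) * (r / 2)) + 2 * r * (B * (1 / 4) * (1 / 4)) := by gcongr
      _ ≤ B * r := by nlinarith [mul_pos hB hr0]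
  have hsub : Set.Icc (s1 - t) (s1 + t) ⊆
      Set.Icc (-r) r ∩ {s : ℝ | y + s • e ∈ Hset Q a b M r} := by
    intro s hs
    have hsr : s ∈ Set.Icc (-r) r := ⟨by linarith [hs.1, hs1.1], by linarith [hs.2, hs1.2]⟩
    have hs1r : s1 ∈ Set.Icc (-r) r := ⟨by linarith [hs1.1], by linarith [hs1.2]⟩
    have h1 := hlip s hsr s1 hs1r
    have h2 : |s - s1| ≤ t := by
      rw [abs_le]; constructor <;> linarith [hs.1, hs.2]
    have h3 : |f s - f s1| ≤ (b - a) / 2 := by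
      refine h1.trans ((mul_le_mul_of_nonneg_left h2 (by positivity)).trans (le_of_eq ?_))
      rw [ht_def]; field_simp
    rw [hfs1, abs_le] at h3
    have h4 : y + s • e - M = y - M + s • e := by abel
    refine ⟨hsr, ⟨?_, ?_⟩, ?_⟩
    · rw [h4]; change a ≤ f s; linarith
    · rw [h4]; change f s ≤ b; linarith
    · have h5 : y + s • e = M + ((y - M) + s • e) := by abel
      rw [h5]
      linarith [norm_add_le M ((y - M) + s • e), norm_add_le (y - M) (s • e), hse s hsr]
  refine le_trans (le_of_eq ?_) (measure_mono hsub)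
  rw [Real.volume_Icc]; congr 1; ring

/-- Lower bound of order `r^(d-2)` for the volume. Around a light-like direction `p + m`, moving
along `p` changes the form at rate `O(r)`, so each such segment crosses the shell in time at least
a constant times `1 / r`. -/
lemma volume_bound {d : ℕ} {Q : Matrix (Fin d) (Fin d) ℝ} (hd : 2 ≤ d) (hQ : Q.IsSymm)
    {p m : Fin d → ℝ} (hp : quadForm Q p = 1) (hm : quadForm Q m = -1)
    (hpm : Q.mulVec p ⬝ᵥ m = 0) {a b : ℝ} (hab : a < b) (M : Fin d → ℝ) :
    ∃ c > 0, ∃ r₁ > 0, ∀ r ≥ r₁, c * r ^ (d - 2) ≤ (volume (Hset Q a b M r)).toReal := by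
  obtain ⟨B, hB, hBQ⟩ := exists_bilin_bound Q
  set σ := 1 / (4 * (‖p‖ + ‖m‖ + 1)) with hσ_def
  have hσ : 0 < σ := by positivity
  have hσ1 : σ * (‖p‖ + ‖m‖) ≤ 1 / 4 := by
    rw [hσ_def, one_div_mul_eq_div, div_le_div_iff₀ (by positivity) (by norm_num)]; linarith
  set e : Fin d → ℝ := σ • p with he
  set y0 : Fin d → ℝ := σ • (p + m) with hy0
  have hen : ‖e‖ ≤ 1 / 4 := by
    rw [he, norm_smul, Real.norm_of_nonneg hσ.le]
    nlinarith [norm_nonneg m]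
  have hy0n : ‖y0‖ ≤ 1 / 4 := by
    rw [hy0, norm_smul, Real.norm_of_nonneg hσ.le]
    exact (mul_le_mul_of_nonneg_left (norm_add_le _ _) hσ.le).trans hσ1
  set η := min (1 / 4) (σ ^ 2 / (6 * B)) with hη_def
  have hη : 0 < η := lt_min (by norm_num) (by positivity)
  have hη1 : η ≤ 1 / 4 := min_le_left _ _
  have hη2 : 6 * B * η ≤ σ ^ 2 := by
    have : η ≤ σ ^ 2 / (6 * B) := min_le_right _ _
    rw [le_div_iff₀ (by positivity)] at this; linarith
  set r₁ := 4 * ‖M‖ + (|a| + |b|) * (4 / σ ^ 2) + 1 + (b - a) / B with hr₁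
  have hba : 0 < b - a := by linarith
  refine ⟨(2 * η) ^ d * ((b - a) / (2 * B)), by positivity, r₁, by positivity, ?_⟩
  intro r hr
  have hq1 : 0 ≤ (|a| + |b|) * (4 / σ ^ 2) := by positivity
  have hq2 : 0 ≤ (b - a) / B := by positivity
  have hM : ‖M‖ ≤ r / 4 := by linarith
  have hr1 : 1 ≤ r := by linarith [norm_nonneg M]
  have hr0 : 0 < r := by linarith
  have hrab : |a| + |b| ≤ σ ^ 2 / 4 * r ^ 2 := by
    have h1 : (|a| + |b|) * (4 / σ ^ 2) ≤ r := by linarith [norm_nonneg M]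
    have h2 : (|a| + |b|) * (4 / σ ^ 2) ≤ r ^ 2 := by nlinarith
    rw [mul_div_assoc', div_le_iff₀ (by positivity)] at h2
    linarith
  have hrB : (b - a) / B ≤ r := by linarith [norm_nonneg M]
  set t := (b - a) / (2 * (B * r)) with ht_def
  have ht : 0 < t := by positivity
  have htr : t ≤ r / 2 := by
    rw [div_le_iff₀ hB] at hrB
    rw [ht_def, div_le_div_iff₀ (by positivity) (by norm_num)]
    nlinarith [mul_pos hB hr0]
  have hv0 : ∀ s : ℝ, quadForm Q (r • y0 + s • e) = σ ^ 2 * ((r + s) ^ 2 - r ^ 2) := by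
    intro s
    have : r • y0 + s • e = (σ * r) • m + (σ * (r + s)) • p := by
      rw [hy0, he]; module
    rw [this, quadForm_add hQ, quadForm_smul, quadForm_smul, hp, hm, Matrix.mulVec_smul, smul_dotProduct,
      dotProduct_smul, hpm]
    simp only [smul_eq_mul]; ring
  have key := line_crossing hQ hB hBQ hen hy0n hη1 hη2 hr0 hM hrab ht_def htr ht hv0
  have hfin := volume_ge_of_lines (measurableSet_Hset Q a b M r) measurableSet_ball e r _ key
  rw [Real.volume_pi_ball _ (by positivity), Fintype.card_fin,
    ← ENNReal.ofReal_toReal (volume_Hset_lt_top Q a b M r).ne, ← ENNReal.ofReal_mul (by positivity),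
    ← ENNReal.ofReal_mul (by positivity), ENNReal.ofReal_le_ofReal_iff (by positivity)] at hfin
  obtain ⟨n, rfl⟩ : ∃ n, d = n + 2 := ⟨d - 2, by omega⟩
  rw [Nat.add_sub_cancel]
  have h7 : 2 * t * (2 * (η * r)) ^ (n + 2) =
      2 * r * ((2 * η) ^ (n + 2) * ((b - a) / (2 * B)) * r ^ n) := by
    rw [ht_def]; field_simp; ring
  rw [h7] at hfin
  exact le_of_mul_le_mul_left hfin (by positivity)

/-! ### Linear algebra of block-type forms -/

/-- A symmetric positive form is comparable to the squared norm, by compactness of the sphere. -/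
lemma exists_goodForm {d : ℕ} (hd : 0 < d) {P : Matrix (Fin d) (Fin d) ℝ}
    (hs : ∀ x y : Fin d → ℝ, P.mulVec x ⬝ᵥ y = P.mulVec y ⬝ᵥ x)
    (hpos : ∀ x : Fin d → ℝ, x ≠ 0 → 0 < P.mulVec x ⬝ᵥ x) :
    ∃ c0 C0, GoodForm P c0 C0 := by
  obtain ⟨B, hB, hBP⟩ := exists_bilin_bound P
  have : Nonempty (Fin d) := ⟨⟨0, hd⟩⟩
  have hne : (Metric.sphere (0 : Fin d → ℝ) 1).Nonempty := NormedSpace.sphere_nonempty.2 zero_le_one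
  obtain ⟨x0, hx0, hmin⟩ := (isCompact_sphere (0 : Fin d → ℝ) 1).exists_isMinOn hne
    (continuous_quadForm P).continuousOn
  have hx0' : x0 ≠ 0 := by
    rintro rfl; simp at hx0
  refine ⟨quadForm P x0, B, ⟨hpos x0 hx0', hB, hs, ?_, hBP⟩⟩
  intro x
  rcases eq_or_ne x 0 with rfl | hx
  · simp
  have hn : 0 < ‖x‖ := norm_pos_iff.2 hx
  have h1 : quadForm P x0 ≤ quadForm P (‖x‖⁻¹ • x) := hmin (by
    rw [mem_sphere_zero_iff_norm, norm_smul, norm_inv, norm_norm, inv_mul_cancel₀ hn.ne'])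
  rw [quadForm_smul, inv_pow, inv_mul_eq_div, le_div_iff₀ (by positivity)] at h1
  exact h1

/-- Changing the sign of the negative block of `Q` and rescaling by `1 / π` gives a positive
definite form; the two diagonal blocks also provide a positive and a negative diagonal entry at
`Q`-orthogonal coordinates. -/
lemma block_data {d : ℕ} {Q : Matrix (Fin d) (Fin d) ℝ} (hQ : IsBlockType Q) :
    (∃ P : Matrix (Fin d) (Fin d) ℝ, ∃ c0 C0, GoodForm P c0 C0 ∧
      ∀ v i, P.mulVec v i = Q.mulVec v i / Real.pi ∨ P.mulVec v i = -(Q.mulVec v i / Real.pi)) ∧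
    ∃ i j, 0 < Q i i ∧ Q j j < 0 ∧ Q j i = 0 := by
  obtain ⟨d₁, d₂, rfl, Qp, Qm, h1, h2, hp, hm, rfl⟩ := hQ
  simp only [Fin.cast_refl, id_eq]
  set e := (finSumFinEquiv (m := d₁) (n := d₂)).symm with he
  have hQv : ∀ (v : Fin (d₁ + d₂) → ℝ) (A : Matrix (Fin d₁) (Fin d₁) ℝ)
      (D : Matrix (Fin d₂) (Fin d₂) ℝ),
      ((Matrix.fromBlocks A 0 0 D).submatrix (fun i => e i) (fun i => e i)).mulVec v =
      Sum.elim (A.mulVec fun i => v (e.symm (Sum.inl i)))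
        (D.mulVec fun i => v (e.symm (Sum.inr i))) ∘ e := by
    intro v A D
    have := Matrix.submatrix_mulVec_equiv (Matrix.fromBlocks A 0 0 D) v e e
    refine this.trans ?_
    rw [Matrix.fromBlocks_mulVec]
    simp only [Matrix.zero_mulVec, add_zero, zero_add]
    rfl
  have hdot : ∀ (v w : Fin (d₁ + d₂) → ℝ) (A : Matrix (Fin d₁) (Fin d₁) ℝ)
      (D : Matrix (Fin d₂) (Fin d₂) ℝ),
      ((Matrix.fromBlocks A 0 0 D).submatrix (fun i => e i) (fun i => e i)).mulVec v ⬝ᵥ w =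
      (A.mulVec fun i => v (e.symm (Sum.inl i))) ⬝ᵥ (fun i => w (e.symm (Sum.inl i))) +
      (D.mulVec fun i => v (e.symm (Sum.inr i))) ⬝ᵥ (fun i => w (e.symm (Sum.inr i))) := by
    intro v w A D
    rw [hQv, dotProduct, ← Equiv.sum_comp e.symm, Fintype.sum_sum_type]
    simp [dotProduct]
  have hsymm : ∀ {n : ℕ} {A : Matrix (Fin n) (Fin n) ℝ}, A.PosDef → ∀ x y : Fin n → ℝ,
      A.mulVec x ⬝ᵥ y = A.mulVec y ⬝ᵥ x := by
    intro n A hA x y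
    have hT : A.transpose = A := by
      have := hA.isHermitian.eq
      rwa [Matrix.conjTranspose_eq_transpose_of_trivial] at this
    rw [dotProduct_comm, Matrix.dotProduct_mulVec, ← Matrix.mulVec_transpose, hT]
  have hpos : ∀ {n : ℕ} {A : Matrix (Fin n) (Fin n) ℝ}, A.PosDef → ∀ x : Fin n → ℝ, x ≠ 0 →
      0 < A.mulVec x ⬝ᵥ x := by
    intro n A hA x hx
    have := hA.dotProduct_mulVec_pos hx
    rwa [star_trivial, dotProduct_comm] at this
  have hnonneg : ∀ {n : ℕ} {A : Matrix (Fin n) (Fin n) ℝ}, A.PosDef → ∀ x : Fin n → ℝ,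
      0 ≤ A.mulVec x ⬝ᵥ x := by
    intro n A hA x
    rcases eq_or_ne x 0 with rfl | hx
    · simp
    · exact (hpos hA x hx).le
  constructor
  · set R := (Matrix.fromBlocks Qp 0 0 Qm).submatrix (fun i => e i) (fun i => e i) with hR
    have hpi := Real.pi_pos
    have hmul : ∀ v, (Real.pi⁻¹ • R).mulVec v = Real.pi⁻¹ • R.mulVec v := fun v =>
      Matrix.smul_mulVec _ _ _
    refine ⟨Real.pi⁻¹ • R, ?_⟩
    obtain ⟨c0, C0, hg⟩ := exists_goodForm (P := Real.pi⁻¹ • R) (by omega) (by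
      intro x y
      rw [hmul, hmul, smul_dotProduct, smul_dotProduct, hR, hdot, hdot, hsymm hp, hsymm hm]) (by
      intro x hx
      rw [hmul, smul_dotProduct, hR, hdot, smul_eq_mul]
      refine mul_pos (by positivity) ?_
      by_cases hx1 : (fun i => x (e.symm (Sum.inl i))) = 0
      · have hx2 : (fun i => x (e.symm (Sum.inr i))) ≠ 0 := by
          intro hx2
          apply hx
          ext i
          rw [← e.symm_apply_apply i]
          rcases e i with k | k
          · exact congrFun hx1 k
          · exact congrFun hx2 k
        exact add_pos_of_nonneg_of_pos (hnonneg hp _) (hpos hm _ hx2)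
      · exact add_pos_of_pos_of_nonneg (hpos hp _ hx1) (hnonneg hm _))
    refine ⟨c0, C0, hg, fun v i => ?_⟩
    rw [hmul, hR, hQv, Pi.smul_apply, hQv]
    simp only [Function.comp_apply, smul_eq_mul]
    rcases e i with k | k
    · left
      simp only [Sum.elim_inl]; ring
    · right
      simp only [Sum.elim_inr, Matrix.neg_mulVec, Pi.neg_apply]; ring
  · refine ⟨e.symm (Sum.inl ⟨0, h1⟩), e.symm (Sum.inr ⟨0, h2⟩), ?_, ?_, ?_⟩
    · simpa using hp.diag_pos
    · simpa using hm.diag_pos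
    · simp

/-- A form with a positive and a negative diagonal entry at orthogonal coordinates takes the
values `1` and `-1` at orthogonal vectors. -/
lemma exists_unit_vectors {d : ℕ} {Q : Matrix (Fin d) (Fin d) ℝ} {i j : Fin d} (hi : 0 < Q i i)
    (hj : Q j j < 0) (hij : Q j i = 0) :
    ∃ p m : Fin d → ℝ, quadForm Q p = 1 ∧ quadForm Q m = -1 ∧ Q.mulVec p ⬝ᵥ m = 0 := by
  have key : ∀ (i j : Fin d) (k l : ℝ),
      Q.mulVec (Pi.single i k) ⬝ᵥ Pi.single j l = k * l * Q j i := by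
    intro i j k l
    rw [dotProduct_single, Matrix.mulVec, dotProduct_single]; ring
  refine ⟨Pi.single i (1 / Real.sqrt (Q i i)), Pi.single j (1 / Real.sqrt (-Q j j)), ?_, ?_, ?_⟩
  · refine (key _ _ _ _).trans ?_
    rw [div_mul_div_comm, Real.mul_self_sqrt hi.le]; field_simp
  · refine (key _ _ _ _).trans ?_
    rw [div_mul_div_comm, Real.mul_self_sqrt (by linarith)]
    have := hj.ne
    field_simp
  · rw [key, hij, mul_zero]

/-! ### The relative remainder -/

/-- For a non-degenerate block-type form in dimension `d ≥ 5`, `Δ(r,M) = O(1)` as `r → ∞`. -/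
theorem deltaRel_bounded (d : ℕ) (hd : 5 ≤ d) (Q : Matrix (Fin d) (Fin d) ℝ)
    (hsym : Q.IsSymm) (hdet : IsUnit Q.det) (hblock : IsBlockType Q)
    (a b : ℝ) (hab : a < b) (M : Fin d → ℝ) :
    ∃ C > 0, ∃ r₁ > 0, ∀ r ≥ r₁, DeltaRel Q a b M r ≤ C := by
  obtain ⟨⟨P, c0, C0, hP, hPQ⟩, i, j, hi, hj, hij⟩ := block_data hblock
  obtain ⟨p, m, hp, hm, hpm⟩ := exists_unit_vectors hi hj hij
  obtain ⟨C, hC, hcount⟩ := count_bound hd hsym hP hPQ hab M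
  obtain ⟨c, hc, r₁, hr₁, hvol⟩ := volume_bound (by omega) hsym hp hm hpm hab M
  refine ⟨C / c + 1, by positivity, max r₁ 1, by positivity, ?_⟩
  intro r hr
  have hr1 : 1 ≤ r := (le_max_right _ _).trans hr
  have hn := hcount r hr1
  have hv := hvol r ((le_max_left _ _).trans hr)
  have hr0 : 0 < r ^ (d - 2) := by positivity
  rw [DeltaRel]
  set n : ℝ := (latticeCount (Hset Q a b M r) : ℝ) with hn_def
  set V := (volume (Hset Q a b M r)).toReal
  have hn0 : 0 ≤ n := Nat.cast_nonneg _
  have hV : 0 < V := lt_of_lt_of_le (by positivity) hv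
  have hnV : n / V ≤ C / c := by
    rw [div_le_div_iff₀ hV hc]
    nlinarith
  rw [sub_div, div_self hV.ne', abs_le]
  have : 0 ≤ n / V := by positivity
  have : 0 ≤ C / c := by positivity
  constructor <;> linarith
end

section
/- For every β > 0 and every T ∈ ℝ, the contour integral identity (1/(2πi)) ∫_{β−i∞}^{β+i∞} e^{zT} dz/z² = max{T, 0} holds; equivalently, (1/(2π)) ∫_{ℝ} e^{(β+it)T} / (β+it)² dt = max{T, 0}, where the integral is over t ∈ ℝ. -/
open MeasureTheory

/-!
The identity is Fourier inversion at `T` for the damped ramp `g u = max u 0 * exp (-β u)`, which is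
continuous and integrable because `β > 0`. Its Fourier transform at `ξ` is
`∫ u in (0, ∞), u * exp (-(β + 2πiξ) u) = 1 / (β + 2πiξ) ^ 2` (`fourier_dampedRamp`), which is
integrable in `ξ` (`integrable_one_div_sq_line`). The substitution `t = 2πξ` and multiplication by
`exp (β T)` turn the inversion formula into the claim.
-/

/-- The ramp `max u 0` damped by `exp (-β u)`; the damping makes it integrable for `β > 0`. -/
noncomputable def dampedRamp (β u : ℝ) : ℂ := ((max u 0 : ℝ) : ℂ) * Complex.exp (-(β * u))

lemma continuous_dampedRamp (β : ℝ) : Continuous (dampedRamp β) := by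
  unfold dampedRamp
  fun_prop

lemma integrableOn_mul_exp {z : ℂ} (hz : 0 < z.re) :
    IntegrableOn (fun u : ℝ => (u : ℂ) * Complex.exp (-(z * u))) (Set.Ioi 0) := by
  have hr : IntegrableOn (fun u : ℝ => u ^ ((2 : ℝ) - 1) * Real.exp (-(z.re * u)))
      (Set.Ioi 0) := by
    -- A non-integrable function has Bochner integral zero, while this one has a positive integral.
    by_contra hni
    have h0 := integral_undef hni
    rw [Real.integral_rpow_mul_exp_neg_mul_Ioi two_pos hz] at h0
    have h1 : 0 < (1 / z.re) ^ (2 : ℝ) * Real.Gamma 2 :=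
      mul_pos (Real.rpow_pos_of_pos (by positivity) _) (Real.Gamma_pos_of_pos two_pos)
    exact h1.ne' h0
  refine Integrable.mono' hr (by fun_prop) ?_
  filter_upwards [ae_restrict_mem measurableSet_Ioi] with u hu
  have hu : 0 < u := hu
  norm_num [Complex.norm_exp, abs_of_pos hu]

/-- The Laplace transform of `u` on the right half-plane, computed from the primitive
`-(u / z + 1 / z ^ 2) * exp (-z u)`. -/
lemma integral_mul_exp {z : ℂ} (hz : 0 < z.re) :
    ∫ u : ℝ in Set.Ioi 0, (u : ℂ) * Complex.exp (-(z * u)) = 1 / z ^ 2 := by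
  have hz0 : z ≠ 0 := by rintro rfl; simp at hz
  have hd : ∀ u ∈ Set.Ici (0 : ℝ), HasDerivAt
      (fun u : ℝ => -(1 / z * (u * Complex.exp (-(z * u))) + 1 / z ^ 2 * Complex.exp (-(z * u))))
      (u * Complex.exp (-(z * u))) u := by
    intro u _
    have h1 : HasDerivAt (fun u : ℝ => (u : ℂ)) 1 u := Complex.ofRealCLM.hasDerivAt
    have h2 := (h1.const_mul z).fun_neg.cexp
    convert! (((h1.fun_mul h2).const_mul (1 / z)).fun_add (h2.const_mul (1 / z ^ 2))).fun_neg using 1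
    field_simp
    ring
  have t0 : Filter.Tendsto (fun u : ℝ => Complex.exp (-(z * u))) Filter.atTop (nhds 0) := by
    rw [tendsto_zero_iff_norm_tendsto_zero]
    refine (tendsto_rpow_mul_exp_neg_mul_atTop_nhds_zero 0 z.re hz).congr fun u => ?_
    simp [Complex.norm_exp]
  have t1 : Filter.Tendsto (fun u : ℝ => (u : ℂ) * Complex.exp (-(z * u)))
      Filter.atTop (nhds 0) := by
    rw [tendsto_zero_iff_norm_tendsto_zero]
    refine (tendsto_rpow_mul_exp_neg_mul_atTop_nhds_zero 1 z.re hz).congr' ?_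
    filter_upwards [Filter.eventually_gt_atTop 0] with u hu
    simp [Complex.norm_exp, abs_of_pos hu]
  rw [integral_Ioi_of_hasDerivAt_of_tendsto' hd (integrableOn_mul_exp hz)
    ((t1.const_mul (1 / z)).add (t0.const_mul (1 / z ^ 2))).neg]
  simp

lemma ramp_mul_exp_eq_indicator (z : ℂ) :
    (fun u : ℝ => ((max u 0 : ℝ) : ℂ) * Complex.exp (-(z * u)))
      = (Set.Ioi (0 : ℝ)).indicator fun u : ℝ => (u : ℂ) * Complex.exp (-(z * u)) := by
  ext u
  by_cases hu : 0 < u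
  · rw [Set.indicator_of_mem (Set.mem_Ioi.2 hu), max_eq_left hu.le]
  · rw [Set.indicator_of_notMem (by simpa using hu), max_eq_right (not_lt.1 hu)]
    simp

lemma integral_ramp_mul_exp {z : ℂ} (hz : 0 < z.re) :
    ∫ u : ℝ, ((max u 0 : ℝ) : ℂ) * Complex.exp (-(z * u)) = 1 / z ^ 2 := by
  rw [ramp_mul_exp_eq_indicator, integral_indicator measurableSet_Ioi, integral_mul_exp hz]

lemma integrable_dampedRamp {β : ℝ} (hβ : 0 < β) : Integrable (dampedRamp β) := by
  have h := (integrableOn_mul_exp (z := β) (by simpa using hβ)).integrable_indicator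
    measurableSet_Ioi
  rwa [← ramp_mul_exp_eq_indicator] at h

lemma fourier_dampedRamp {β : ℝ} (hβ : 0 < β) (ξ : ℝ) :
    FourierTransform.fourier (dampedRamp β) ξ
      = 1 / ((β : ℂ) + ((2 * Real.pi * ξ : ℝ) : ℂ) * Complex.I) ^ 2 := by
  rw [← integral_ramp_mul_exp (by simpa using hβ), Real.fourier_real_eq_integral_exp_smul]
  congr 1
  ext u
  rw [dampedRamp, smul_eq_mul, mul_left_comm, ← Complex.exp_add]
  congr 2
  push_cast
  ring

lemma integrable_one_div_sq_line {β : ℝ} (hβ : 0 < β) :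
    Integrable fun t : ℝ => 1 / ((β : ℂ) + (t : ℂ) * Complex.I) ^ 2 := by
  have h := (integrable_inv_one_add_sq.comp_mul_left' (inv_ne_zero hβ.ne')).const_mul (β ^ 2)⁻¹
  refine h.mono' (Measurable.aestronglyMeasurable (by fun_prop)) (Filter.Eventually.of_forall fun t => le_of_eq ?_)
  rw [norm_div, norm_pow, Complex.sq_norm, Complex.normSq_add_mul_I, norm_one, one_div,
    ← mul_inv]
  congr 1
  field_simp

theorem posPart_contour_integral (β T : ℝ) (hβ : 0 < β) :
    (1 / (2 * (Real.pi : ℂ))) *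
      ∫ t : ℝ, Complex.exp (((β : ℂ) + (t : ℂ) * Complex.I) * (T : ℂ)) /
        ((β : ℂ) + (t : ℂ) * Complex.I) ^ 2 = ((max T 0 : ℝ) : ℂ) := by
  have h2π : (0 : ℝ) < 2 * Real.pi := by positivity
  have hF : FourierTransform.fourier (dampedRamp β) = fun ξ : ℝ =>
      1 / ((β : ℂ) + ((2 * Real.pi * ξ : ℝ) : ℂ) * Complex.I) ^ 2 :=
    funext (fourier_dampedRamp hβ)
  have hinv := (integrable_dampedRamp hβ).fourierInv_fourier_eq
    (by rw [hF]; exact (integrable_one_div_sq_line hβ).comp_mul_left' h2π.ne')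
    (continuous_dampedRamp β).continuousAt (v := T)
  rw [hF, Real.fourierInv_eq'] at hinv
  have hsub := Measure.integral_comp_mul_left (fun t : ℝ =>
    Complex.exp (((β : ℂ) + (t : ℂ) * Complex.I) * (T : ℂ)) /
        ((β : ℂ) + (t : ℂ) * Complex.I) ^ 2) (2 * Real.pi)
  have hc : (1 / (2 * (Real.pi : ℂ))) = (((2 * Real.pi)⁻¹ : ℝ) : ℂ) := by push_cast; simp
  rw [abs_of_pos (inv_pos.2 h2π), Complex.real_smul] at hsub
  rw [hc, ← hsub]
  calc _ = Complex.exp (β * T) * dampedRamp β T := by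
        rw [← hinv, ← integral_const_mul]
        congr 1
        ext ξ
        rw [smul_eq_mul, ← mul_assoc, ← Complex.exp_add, mul_one_div]
        congr 2
        simp only [RCLike.inner_apply, conj_trivial]
        push_cast
        ring
    _ = _ := by
        rw [dampedRamp, mul_left_comm, ← Complex.exp_add]
        simp
end

section
/- Let Ω be a real symmetric positive definite d×d matrix, z ∈ ℂ with Re z > 0, and v ∈ ℂ^d. Then Σ_{m ∈ ℤ^d} exp( −z·Ω[m] + 2πi·⟨m,v⟩ ) = (z/π)^{−d/2} · (det Ω)^{−1/2} · Σ_{n ∈ ℤ^d} exp( −(π²/z)·Ω^{−1}[n+v] ), where (z/π)^{−d/2} is defined via the principal branch of the complex power (so that it is positive for real z > 0); both series converge absolutely. -/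
/-!
The transformation formula is proved by induction on `d`, from one-dimensional Poisson summation
for Gaussians (`Complex.tsum_exp_neg_quadratic`) and completion of the square.

Write `a = Ω₀₀`, let `b` be the rest of the first row, and let `S` be the Schur complement of `a`
in `Ω` (`schurC`). Completing the square (`qfC_cons`) gives
`Ω[(x, y)] = a (x + ⟨b,y⟩/a)² + S[y]`. Poisson summation in the first coordinate `m₀`, for a fixed
tail `m'`, turns the left side into a double sum over `(n₀, m')` of
`exp(-(π²/(z a)) (n₀ + v₀)²) · exp(-z S[m'] + 2πi ⟨m', v' - (n₀ + v₀) b/a⟩)` (`mixedTerm`).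
The dependence of its second factor on `n₀` is through a phase of modulus one, so the double series
is dominated by a product of two summable families (`summable_mixed`) and may be summed over `m'`
first. The induction hypothesis for `S`, which is again positive definite, applies to that inner
sum, and the result is reassembled through `det Ω = a det S` (`det_schurC`) and
`Ω⁻¹[w] = w₀²/a + S⁻¹[w' - w₀ b/a]` (`qfC_inv_cons`).

Absolute convergence of both series follows from coercivity of `Ω` and `Ω⁻¹`, which bounds the
terms by products of one-dimensional Gaussians (`summable_gauss`).
-/

open MeasureTheory

/-- The bilinear (not Hermitian) quadratic form `A[w] = Σ_{j,k} A_{jk} w_j w_k` of a real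
matrix applied to a complex vector. -/
noncomputable def qfC {d : ℕ} (A : Matrix (Fin d) (Fin d) ℝ) (w : Fin d → ℂ) : ℂ :=
  ∑ j, ∑ k, (A j k : ℂ) * w j * w k

/-! ### Quadratic forms and coercivity -/

lemma qfC_eq_dot {d : ℕ} (A : Matrix (Fin d) (Fin d) ℝ) (w : Fin d → ℂ) :
    qfC A w = w ⬝ᵥ (A.map (algebraMap ℝ ℂ)).mulVec w := by
  simp only [qfC, dotProduct, Matrix.mulVec, Finset.mul_sum, Matrix.map_apply,
    Complex.coe_algebraMap]
  exact Finset.sum_congr rfl fun j _ => Finset.sum_congr rfl fun k _ => by ring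

lemma qfC_ofReal {d : ℕ} (A : Matrix (Fin d) (Fin d) ℝ) (x : Fin d → ℝ) :
    qfC A (fun j => (x j : ℂ)) = ((x ⬝ᵥ A.mulVec x : ℝ) : ℂ) := by
  simp only [qfC, dotProduct, Matrix.mulVec, Finset.mul_sum]
  push_cast
  exact Finset.sum_congr rfl fun j _ => Finset.sum_congr rfl fun k _ => by ring

lemma qfC_intCast {d : ℕ} (A : Matrix (Fin d) (Fin d) ℝ) (m : Fin d → ℤ) :
    qfC A (fun j => (m j : ℂ)) =
      (((fun j => (m j : ℝ)) ⬝ᵥ A.mulVec (fun j => (m j : ℝ)) : ℝ) : ℂ) := by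
  simpa using qfC_ofReal A (fun j => (m j : ℝ))

lemma posDef_symm {d : ℕ} {Ω : Matrix (Fin d) (Fin d) ℝ} (hΩ : Ω.PosDef) (i j : Fin d) :
    Ω i j = Ω j i := by
  simpa using (hΩ.1.apply i j).symm

/-- The constant is the minimum of the form on the unit sphere of the sup norm, up to a factor
depending only on `d`. -/
lemma posDef_coercive {d : ℕ} {Ω : Matrix (Fin d) (Fin d) ℝ} (hΩ : Ω.PosDef) :
    ∃ c > 0, ∀ x : Fin d → ℝ, c * ∑ j, x j ^ 2 ≤ x ⬝ᵥ Ω.mulVec x := by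
  obtain ⟨c, hc, h⟩ := (isCompact_sphere (0 : Fin d → ℝ) 1).exists_forall_le'
    (f := fun x => x ⬝ᵥ Ω.mulVec x) (a := 0) (by fun_prop) (by
      intro x hx
      have hx0 : x ≠ 0 := by rintro rfl; simp at hx
      simpa using hΩ.dotProduct_mulVec_pos hx0)
  refine ⟨c / (d + 1), by positivity, fun x => ?_⟩
  have h1 : ∑ j, x j ^ 2 ≤ (d + 1) * ‖x‖ ^ 2 := by
    calc ∑ j, x j ^ 2 ≤ ∑ _j : Fin d, ‖x‖ ^ 2 := by
          refine Finset.sum_le_sum fun j _ => ?_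
          rw [← sq_abs]
          exact pow_le_pow_left₀ (abs_nonneg _) (norm_le_pi_norm x j) 2
      _ = d * ‖x‖ ^ 2 := by simp
      _ ≤ _ := by nlinarith [sq_nonneg ‖x‖]
  have h2 : c * ‖x‖ ^ 2 ≤ x ⬝ᵥ Ω.mulVec x := by
    by_cases hx : x = 0
    · simp [hx]
    have hn : ‖x‖ ≠ 0 := norm_ne_zero_iff.mpr hx
    have := h (‖x‖⁻¹ • x) (by simp [norm_smul, hn])
    simp only [Matrix.mulVec_smul, smul_dotProduct, dotProduct_smul, smul_eq_mul] at this
    calc c * ‖x‖ ^ 2 ≤ (‖x‖⁻¹ * (‖x‖⁻¹ * (x ⬝ᵥ Ω.mulVec x))) * ‖x‖ ^ 2 := by gcongr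
      _ = _ := by field_simp
  calc c / (d + 1) * ∑ j, x j ^ 2 ≤ c / (d + 1) * ((d + 1) * ‖x‖ ^ 2) := by gcongr
    _ = c * ‖x‖ ^ 2 := by field_simp
    _ ≤ _ := h2

/-! ### Absolute convergence of Gaussian sums -/

/-- A special case of the convergence of Jacobi's two-variable theta series. -/
lemma summable_exp_int {c : ℝ} (hc : 0 < c) (r : ℝ) :
    Summable fun n : ℤ => Real.exp (-c * (n : ℝ) ^ 2 + n * r) := by
  have h := ((summable_jacobiTheta₂_term_iff ((-(r / (2 * Real.pi)) : ℝ) * Complex.I)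
    ((c / Real.pi : ℝ) * Complex.I)).mpr (by
      rw [Complex.im_ofReal_mul]; simp; positivity)).norm
  refine h.congr fun n => ?_
  rw [norm_jacobiTheta₂_term]
  congr 1
  rw [Complex.im_ofReal_mul, Complex.im_ofReal_mul, Complex.I_im]
  field_simp
  ring

lemma summable_prod_pi {d : ℕ} (f : Fin d → ℤ → ℝ) (h0 : ∀ j n, 0 ≤ f j n)
    (hf : ∀ j, Summable (f j)) : Summable fun m : Fin d → ℤ => ∏ j, f j (m j) := by
  induction d with
  | zero => exact (hasSum_fintype _).summable
  | succ d ih =>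
    rw [← (Fin.consEquiv fun _ : Fin (d + 1) => ℤ).summable_iff]
    have := (hf 0).mul_of_nonneg (ih (fun j => f j.succ) (fun j => h0 _) (fun j => hf _))
      (h0 0) (fun m => Finset.prod_nonneg fun j _ => h0 _ _)
    refine this.congr fun p => ?_
    simp [Fin.prod_univ_succ, Fin.consEquiv]

/-- Absolute convergence of a Gaussian series over `ℤ^d` with an arbitrary complex linear term. -/
lemma summable_gauss {d : ℕ} {Ω : Matrix (Fin d) (Fin d) ℝ} (hΩ : Ω.PosDef)
    {z : ℂ} (hz : 0 < z.re) (l : Fin d → ℂ) :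
    Summable (fun m : Fin d → ℤ =>
      ‖Complex.exp (-z * qfC Ω (fun j => (m j : ℂ)) + ∑ j, (m j : ℂ) * l j)‖) := by
  obtain ⟨c, hc, h⟩ := posDef_coercive hΩ
  refine Summable.of_nonneg_of_le (fun _ => norm_nonneg _) (fun m => ?_)
    (summable_prod_pi (fun j n => Real.exp (-(z.re * c) * (n : ℝ) ^ 2 + n * (l j).re))
      (fun _ _ => (Real.exp_pos _).le) (fun j => summable_exp_int (by positivity) _))
  rw [Complex.norm_exp, ← Real.exp_sum, qfC_intCast, Real.exp_le_exp, Finset.sum_add_distrib,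
    ← Finset.mul_sum, Complex.add_re, Complex.re_mul_ofReal, Complex.re_sum]
  have := mul_le_mul_of_nonneg_left (h fun j => (m j : ℝ)) hz.le
  have e : ∀ j, ((m j : ℂ) * l j).re = m j * (l j).re := fun j => by
    simp
  simp only [e, Complex.neg_re]
  nlinarith

lemma qfC_add {d : ℕ} {A : Matrix (Fin d) (Fin d) ℝ} (hA : ∀ i j, A i j = A j i)
    (x y : Fin d → ℂ) : qfC A (fun j => x j + y j) =
      qfC A x + ∑ j, x j * (2 * ∑ k, (A j k : ℂ) * y k) + qfC A y := by
  have h : ∑ j, ∑ k, (A j k : ℂ) * x j * y k = ∑ j, ∑ k, (A j k : ℂ) * y j * x k := by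
    rw [Finset.sum_comm]
    exact Finset.sum_congr rfl fun j _ => Finset.sum_congr rfl fun k _ => by rw [hA k j]; ring
  have h2 : ∑ j, x j * (2 * ∑ k, (A j k : ℂ) * y k) =
      ∑ j, ∑ k, (A j k : ℂ) * x j * y k + ∑ j, ∑ k, (A j k : ℂ) * y j * x k := by
    rw [← h, ← two_mul]
    simp only [Finset.mul_sum]
    exact Finset.sum_congr rfl fun j _ => Finset.sum_congr rfl fun k _ => by ring
  rw [h2]
  simp only [qfC, ← Finset.sum_add_distrib]
  exact Finset.sum_congr rfl fun j _ => Finset.sum_congr rfl fun k _ => by ring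

/-- Expanding the shifted form by `qfC_add` reduces this to `summable_gauss`. -/
lemma summable_gauss_shift {d : ℕ} {Ω : Matrix (Fin d) (Fin d) ℝ} (hΩ : Ω.PosDef)
    {z : ℂ} (hz : 0 < z.re) (v : Fin d → ℂ) :
    Summable (fun m : Fin d → ℤ => ‖Complex.exp (-z * qfC Ω (fun j => (m j : ℂ) + v j))‖) := by
  refine ((summable_gauss hΩ hz fun j => -z * (2 * ∑ k, (Ω j k : ℂ) * v k)).mul_right
    ‖Complex.exp (-z * qfC Ω v)‖).congr fun m => ?_
  rw [← norm_mul, ← Complex.exp_add, qfC_add (posDef_symm hΩ)]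
  congr 2
  have : ∑ j, (m j : ℂ) * (-z * (2 * ∑ k, (Ω j k : ℂ) * v k)) =
      -z * ∑ j, (m j : ℂ) * (2 * ∑ k, (Ω j k : ℂ) * v k) := by
    rw [Finset.mul_sum]
    exact Finset.sum_congr rfl fun j _ => by ring
  rw [this]; ring

/-! ### Schur complement of the first diagonal entry -/

/-- `Ω⁻¹[Ωu] = Ω[u]`, which makes it possible to compute with `Ω⁻¹` without knowing its entries. -/
lemma qfC_inv {d : ℕ} {Ω : Matrix (Fin d) (Fin d) ℝ} (hΩ : Ω.PosDef) (u : Fin d → ℂ) :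
    qfC Ω⁻¹ ((Ω.map (algebraMap ℝ ℂ)).mulVec u) = qfC Ω u := by
  have h : (Ω⁻¹).map (algebraMap ℝ ℂ) * Ω.map (algebraMap ℝ ℂ) = 1 := by
    rw [← Matrix.map_mul, Matrix.nonsing_inv_mul _ ((Matrix.isUnit_iff_isUnit_det _).mp hΩ.isUnit)]
    simp
  rw [qfC_eq_dot, qfC_eq_dot, Matrix.mulVec_mulVec, h, Matrix.one_mulVec, dotProduct_comm]

lemma exists_mulVec_eq {d : ℕ} {Ω : Matrix (Fin d) (Fin d) ℝ} (hΩ : Ω.PosDef) (w : Fin d → ℂ) :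
    ∃ u, (Ω.map (algebraMap ℝ ℂ)).mulVec u = w := by
  have h : Ω.map (algebraMap ℝ ℂ) * (Ω⁻¹).map (algebraMap ℝ ℂ) = 1 := by
    rw [← Matrix.map_mul, Matrix.mul_nonsing_inv _ ((Matrix.isUnit_iff_isUnit_det _).mp hΩ.isUnit)]
    simp
  exact ⟨((Ω⁻¹).map (algebraMap ℝ ℂ)).mulVec w, by rw [Matrix.mulVec_mulVec, h, Matrix.one_mulVec]⟩

/-- The Schur complement `S = D - b bᵀ / a` of the top-left entry `a` of `Ω = [a, bᵀ; b, D]`.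
It is written in terms of the first row of `Ω`, so it is the Schur complement only for
symmetric `Ω`. -/
noncomputable def schurC {d : ℕ} (Ω : Matrix (Fin (d + 1)) (Fin (d + 1)) ℝ) :
    Matrix (Fin d) (Fin d) ℝ :=
  Matrix.of fun j k => Ω j.succ k.succ - Ω 0 j.succ * Ω 0 k.succ / Ω 0 0

lemma diag_pos {d : ℕ} {Ω : Matrix (Fin (d + 1)) (Fin (d + 1)) ℝ} (hΩ : Ω.PosDef) :
    0 < Ω 0 0 := hΩ.diag_pos

/-- Completion of the square in the first coordinate. -/
lemma qfC_cons {d : ℕ} {Ω : Matrix (Fin (d + 1)) (Fin (d + 1)) ℝ} (hΩ : Ω.PosDef)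
    (x : ℂ) (y : Fin d → ℂ) :
    qfC Ω (Fin.cons x y : Fin (d + 1) → ℂ) =
      Ω 0 0 * (x + (∑ j, (Ω 0 j.succ : ℂ) * y j) / Ω 0 0) ^ 2 + qfC (schurC Ω) y := by
  have ha : (Ω 0 0 : ℂ) ≠ 0 := by exact_mod_cast (diag_pos hΩ).ne'
  have hS : qfC (schurC Ω) y = ∑ j, ∑ k, (Ω j.succ k.succ : ℂ) * y j * y k -
      (∑ j, (Ω 0 j.succ : ℂ) * y j) ^ 2 / Ω 0 0 := by
    rw [sq, Finset.sum_mul_sum, Finset.sum_div]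
    simp only [qfC, schurC, Finset.sum_div, ← Finset.sum_sub_distrib, Matrix.of_apply]
    refine Finset.sum_congr rfl fun j _ => Finset.sum_congr rfl fun k _ => ?_
    push_cast; ring
  have hL : qfC Ω (Fin.cons x y : Fin (d + 1) → ℂ) = Ω 0 0 * x ^ 2 +
      2 * x * (∑ j, (Ω 0 j.succ : ℂ) * y j) + ∑ j, ∑ k, (Ω j.succ k.succ : ℂ) * y j * y k := by
    simp only [qfC, Fin.sum_univ_succ, Fin.cons_zero, Fin.cons_succ, Finset.sum_add_distrib,
      posDef_symm hΩ (Fin.succ _) 0, Finset.mul_sum]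
    have e1 : ∑ k : Fin d, (Ω 0 k.succ : ℂ) * x * y k + ∑ j : Fin d, (Ω 0 j.succ : ℂ) * y j * x =
        ∑ j : Fin d, 2 * x * ((Ω 0 j.succ : ℂ) * y j) := by
      rw [← Finset.sum_add_distrib]
      exact Finset.sum_congr rfl fun j _ => by ring
    rw [← e1]; ring
  rw [hS, hL]
  field_simp
  ring

/-- `S[x]` is the value of `Ω` at `(-⟨b,x⟩/a, x)`, where the square in `qfC_cons` vanishes. -/
lemma schurC_posDef {d : ℕ} {Ω : Matrix (Fin (d + 1)) (Fin (d + 1)) ℝ} (hΩ : Ω.PosDef) :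
    (schurC Ω).PosDef := by
  have ha := (diag_pos hΩ).ne'
  refine .of_dotProduct_mulVec_pos ?_ fun x hx => ?_
  · ext i j
    simp only [schurC, Matrix.conjTranspose_apply, Matrix.of_apply, star_trivial]
    rw [posDef_symm hΩ j.succ i.succ]; ring
  · set t : ℝ := -(∑ j, Ω 0 j.succ * x j) / Ω 0 0 with ht
    have hne : (Fin.cons t x : Fin (d + 1) → ℝ) ≠ 0 := by
      intro h
      exact hx (funext fun j => by simpa using congrFun h j.succ)
    have hp := hΩ.dotProduct_mulVec_pos hne
    have e := qfC_cons hΩ t fun j => (x j : ℂ)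
    have e2 : (Fin.cons (t : ℂ) (fun j => (x j : ℂ)) : Fin (d + 1) → ℂ) =
        fun j => (((Fin.cons t x : Fin (d + 1) → ℝ) j : ℝ) : ℂ) := by
      funext j
      refine Fin.cases ?_ (fun j => ?_) j <;> simp
    have e3 : (t : ℂ) + (∑ j, (Ω 0 j.succ : ℂ) * x j) / Ω 0 0 = 0 := by
      rw [ht]; push_cast; ring
    rw [e2, e3, qfC_ofReal, qfC_ofReal] at e
    simp only [ne_eq, OfNat.ofNat_ne_zero, not_false_eq_true, zero_pow, mul_zero, zero_add,
      Complex.ofReal_inj] at e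
    simpa [e] using hp

/-- Subtracting multiples of the first row clears the first column below `a` and leaves `S`. -/
lemma det_schurC {d : ℕ} {Ω : Matrix (Fin (d + 1)) (Fin (d + 1)) ℝ} (hΩ : Ω.PosDef) :
    Ω.det = Ω 0 0 * (schurC Ω).det := by
  have ha := (diag_pos hΩ).ne'
  let B : Matrix (Fin (d + 1)) (Fin (d + 1)) ℝ := Matrix.of fun i j =>
    Ω i j - (Fin.cases 0 (fun i => Ω 0 i.succ / Ω 0 0) i : ℝ) * Ω 0 j
  have h : Ω.det = B.det := by
    refine Matrix.det_eq_of_forall_row_eq_smul_add_const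
      (fun i => (Fin.cases 0 (fun i => Ω 0 i.succ / Ω 0 0) i : ℝ)) 0 rfl fun i j => ?_
    simp [B]
  rw [h, Matrix.det_succ_column_zero, Fin.sum_univ_succ, Finset.sum_eq_zero]
  · simp only [B, Fin.val_zero, pow_zero, one_mul, add_zero, Matrix.of_apply, Fin.cases_zero,
      zero_mul, sub_zero]
    congr 2
    ext i j
    simp [schurC]; ring
  · intro i _
    have : B i.succ 0 = 0 := by
      simp only [B, Matrix.of_apply, Fin.cases_succ]
      rw [posDef_symm hΩ i.succ 0]; field_simp; ring
    simp [this]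

/-- With `w = Ωu`, the first coordinate is `w₀ = a (u₀ + ⟨b,u'⟩/a)` and `S u' = w' - w₀ b/a`, so
this is `qfC_cons` at `u`. -/
lemma qfC_inv_cons {d : ℕ} {Ω : Matrix (Fin (d + 1)) (Fin (d + 1)) ℝ} (hΩ : Ω.PosDef)
    (w : Fin (d + 1) → ℂ) :
    qfC Ω⁻¹ w = w 0 ^ 2 / Ω 0 0 +
      qfC (schurC Ω)⁻¹ (fun j => w j.succ - Ω 0 j.succ * w 0 / Ω 0 0) := by
  have ha : (Ω 0 0 : ℂ) ≠ 0 := by exact_mod_cast (diag_pos hΩ).ne'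
  obtain ⟨u, rfl⟩ := exists_mulVec_eq hΩ w
  rw [qfC_inv hΩ]
  have hu := qfC_cons hΩ (u 0) (Fin.tail u)
  rw [Fin.cons_self_tail] at hu
  rw [hu, ← qfC_inv (schurC_posDef hΩ)]
  have h0 : (Ω.map (algebraMap ℝ ℂ)).mulVec u 0 =
      Ω 0 0 * (u 0 + (∑ j, (Ω 0 j.succ : ℂ) * Fin.tail u j) / Ω 0 0) := by
    simp only [Matrix.mulVec, dotProduct, Fin.sum_univ_succ, Matrix.map_apply,
      Complex.coe_algebraMap, Fin.tail]
    field_simp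
  rw [h0]
  congr 1
  · field_simp
  · congr 1
    funext j
    simp only [Matrix.mulVec, dotProduct, Fin.sum_univ_succ, Matrix.map_apply,
      Complex.coe_algebraMap, schurC, Matrix.of_apply, posDef_symm hΩ j.succ 0]
    have : ∀ k, (((Ω j.succ k.succ - Ω 0 j.succ * Ω 0 k.succ / Ω 0 0 : ℝ)) : ℂ) * Fin.tail u k =
      Ω j.succ k.succ * u k.succ - Ω 0 j.succ / Ω 0 0 * (Ω 0 k.succ * Fin.tail u k) := by
      intro k; simp only [Fin.tail]; push_cast; ring
    simp only [this, Finset.sum_sub_distrib, ← Finset.mul_sum]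
    field_simp
    ring

/-! ### One-dimensional Poisson summation and constants -/

lemma summable_gauss_one {w : ℂ} (hw : 0 < w.re) (v : ℂ) :
    Summable fun n : ℤ => ‖Complex.exp (-w * (n + v) ^ 2)‖ := by
  refine ((summable_exp_int hw (-2 * w * v).re).mul_right ‖Complex.exp (-w * v ^ 2)‖).congr
    fun n => ?_
  have : Real.exp (-w.re * (n : ℝ) ^ 2 + n * (-2 * w * v).re) =
      ‖Complex.exp (-w * (n : ℂ) ^ 2 + n * (-2 * w * v))‖ := by
    rw [Complex.norm_exp]
    congr 1
    have h1 : (-w * (n : ℂ) ^ 2).re = -w.re * (n : ℝ) ^ 2 := by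
      have : (n : ℂ) ^ 2 = (((n : ℝ) ^ 2 : ℝ) : ℂ) := by push_cast; rfl
      rw [this, Complex.re_mul_ofReal, Complex.neg_re]
    have h2 : ((n : ℂ) * (-2 * w * v)).re = n * (-2 * w * v).re := by
      have : (n : ℂ) = ((n : ℝ) : ℂ) := by push_cast; rfl
      rw [this, Complex.re_ofReal_mul]
    rw [Complex.add_re, h1, h2]
  rw [this, ← norm_mul, ← Complex.exp_add]
  congr 2
  ring

/-- Multiplicativity of the principal power, valid since a positive real factor does not change
the argument. -/
lemma ofReal_mul_cpow {a : ℝ} (ha : 0 < a) {w : ℂ} (hw : w ≠ 0) (c : ℂ) :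
    ((a : ℂ) * w) ^ c = (a : ℂ) ^ c * w ^ c := by
  have ha' : (a : ℂ) ≠ 0 := by exact_mod_cast ha.ne'
  rw [Complex.cpow_def_of_ne_zero (mul_ne_zero ha' hw), Complex.cpow_def_of_ne_zero ha',
    Complex.cpow_def_of_ne_zero hw, Complex.log_ofReal_mul ha hw, Complex.ofReal_log ha.le,
    ← Complex.exp_add]
  congr 1; ring

lemma tsum_fin_succ {d : ℕ} {T : (Fin (d + 1) → ℤ) → ℂ} (hT : Summable fun m => ‖T m‖) :
    ∑' m, T m = ∑' (m₀ : ℤ) (m' : Fin d → ℤ), T (Fin.cons m₀ m') := by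
  rw [← (Fin.consEquiv fun _ : Fin (d + 1) => ℤ).tsum_eq]
  exact Summable.tsum_prod (hT.of_norm.comp_injective (Fin.consEquiv _).injective)

lemma tsum_fin_succ' {d : ℕ} {T : (Fin (d + 1) → ℤ) → ℂ} (hT : Summable fun m => ‖T m‖) :
    ∑' m, T m = ∑' (m' : Fin d → ℤ) (m₀ : ℤ), T (Fin.cons m₀ m') := by
  rw [tsum_fin_succ hT]
  exact (Summable.tsum_comm
    (f := fun (m' : Fin d → ℤ) (m₀ : ℤ) => T (Fin.cons m₀ m'))
    ((hT.of_norm.comp_injective (Fin.consEquiv fun _ : Fin (d + 1) => ℤ).injective).prod_symm))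

/-- One-dimensional Poisson summation for a Gaussian centred at `-β/a`. -/
lemma poisson_one {z : ℂ} (hz : 0 < z.re) {a : ℝ} (ha : 0 < a) (β v : ℂ) :
    ∑' n : ℤ, Complex.exp (-z * (a * ((n : ℂ) + β / a) ^ 2) + 2 * Real.pi * Complex.I * (n * v)) =
      1 / ((a : ℂ) * (z / Real.pi)) ^ (1 / 2 : ℂ) *
        ∑' n : ℤ, Complex.exp (-((Real.pi : ℂ) ^ 2 / z / a) * ((n : ℂ) + v) ^ 2) *
          Complex.exp (-(2 * Real.pi * Complex.I * (β * (n + v) / a))) := by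
  have hz0 : z ≠ 0 := by rintro rfl; simp at hz
  have ha0 : (a : ℂ) ≠ 0 := by exact_mod_cast ha.ne'
  have hpi : (Real.pi : ℂ) ≠ 0 := by exact_mod_cast Real.pi_ne_zero
  have hA : 0 < ((a : ℂ) * (z / Real.pi)).re := by
    rw [Complex.re_ofReal_mul, Complex.div_ofReal_re]
    have := Real.pi_pos
    positivity
  -- the linear coefficient is what expanding the square around `-β/a` leaves
  have h := Complex.tsum_exp_neg_quadratic hA (Complex.I * v - z * β / Real.pi)
  have hL : ∀ n : ℤ, Complex.exp (-z * (a * ((n : ℂ) + β / a) ^ 2) +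
      2 * Real.pi * Complex.I * (n * v)) = Complex.exp (-z * β ^ 2 / a) *
      Complex.exp (-Real.pi * ((a : ℂ) * (z / Real.pi)) * n ^ 2 +
        2 * Real.pi * (Complex.I * v - z * β / Real.pi) * n) := by
    intro n
    rw [← Complex.exp_add]
    congr 1
    field_simp
    ring
  simp only [hL]
  -- Poisson summation produces `n - v`; the substitution `n ↦ -n` gives `n + v`
  rw [tsum_mul_left, h, mul_left_comm, ← tsum_mul_left, ← (Equiv.neg ℤ).tsum_eq]
  congr 1
  refine tsum_congr fun n => ?_
  rw [← Complex.exp_add, ← Complex.exp_add]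
  congr 1
  simp only [Equiv.neg_apply, Int.cast_neg]
  field_simp
  ring_nf
  simp only [Complex.I_sq, Complex.I_pow_four, Complex.I_pow_three]
  ring

/-- The factor from Poisson summation in one variable times the constant in dimension `d` is the
constant in dimension `d + 1`. -/
lemma theta_const {z : ℂ} (hz : 0 < z.re) {a D : ℝ} (ha : 0 < a) (hD : 0 < D) (d : ℕ) :
    1 / ((a : ℂ) * (z / Real.pi)) ^ (1 / 2 : ℂ) *
      ((z / Real.pi) ^ (-(d : ℂ) / 2) * (D : ℂ) ^ (-(1 : ℂ) / 2)) =
    (z / Real.pi) ^ (-((d + 1 : ℕ) : ℂ) / 2) * ((a * D : ℝ) : ℂ) ^ (-(1 : ℂ) / 2) := by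
  have hz0 : z ≠ 0 := by rintro rfl; simp at hz
  have hpi : (Real.pi : ℂ) ≠ 0 := by exact_mod_cast Real.pi_ne_zero
  have hw : z / Real.pi ≠ 0 := div_ne_zero hz0 hpi
  have e : -((d + 1 : ℕ) : ℂ) / 2 = -(d : ℂ) / 2 + -(1 : ℂ) / 2 := by push_cast; ring
  rw [one_div, ← Complex.cpow_neg, show -(1 / 2 : ℂ) = -(1 : ℂ) / 2 by ring, e,
    Complex.cpow_add _ _ hw, ofReal_mul_cpow ha hw, Complex.ofReal_mul,
    ofReal_mul_cpow ha (by exact_mod_cast hD.ne')]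
  ring

/-! ### The induction -/

lemma summable_theta_lhs {d : ℕ} {Ω : Matrix (Fin d) (Fin d) ℝ} (hΩ : Ω.PosDef)
    {z : ℂ} (hz : 0 < z.re) (v : Fin d → ℂ) :
    Summable (fun m : Fin d → ℤ =>
      ‖Complex.exp (-z * qfC Ω (fun j => (m j : ℂ)) +
        2 * (Real.pi : ℂ) * Complex.I * ∑ j, (m j : ℂ) * v j)‖) := by
  refine (summable_gauss hΩ hz fun j => 2 * Real.pi * Complex.I * v j).congr fun m => ?_
  rw [Finset.mul_sum]
  congr 3
  exact Finset.sum_congr rfl fun j _ => by ring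

lemma pi_sq_div_re_pos {z : ℂ} (hz : 0 < z.re) : 0 < ((Real.pi : ℂ) ^ 2 / z).re := by
  have hz0 : z ≠ 0 := by rintro rfl; simp at hz
  have := Complex.normSq_pos.mpr hz0
  have := Real.pi_pos
  rw [div_eq_mul_inv, ← Complex.ofReal_pow, Complex.re_ofReal_mul, Complex.inv_re]
  positivity

/-- The terms of the double series over `(n₀, m')` obtained from the theta series by Poisson
summation in the first coordinate alone, without the constant factor. -/
noncomputable def mixedTerm {d : ℕ} (Ω : Matrix (Fin (d + 1)) (Fin (d + 1)) ℝ) (z : ℂ)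
    (v : Fin (d + 1) → ℂ) (n : ℤ) (m' : Fin d → ℤ) : ℂ :=
  Complex.exp (-((Real.pi : ℂ) ^ 2 / z / Ω 0 0) * ((n : ℂ) + v 0) ^ 2) *
    Complex.exp (-z * qfC (schurC Ω) (fun j => (m' j : ℂ)) +
      2 * (Real.pi : ℂ) * Complex.I *
        ∑ j, (m' j : ℂ) * (v j.succ - Ω 0 j.succ * (n + v 0) / Ω 0 0))

/-- The `n₀`-dependent part of the linear term in `m'` is purely imaginary, so the norm of the
term is a product of a function of `n₀` and a function of `m'`. -/
lemma summable_mixed {d : ℕ} {Ω : Matrix (Fin (d + 1)) (Fin (d + 1)) ℝ} (hΩ : Ω.PosDef)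
    {z : ℂ} (hz : 0 < z.re) (v : Fin (d + 1) → ℂ) :
    Summable fun p : ℤ × (Fin d → ℤ) =>
      mixedTerm Ω z v p.1 p.2 := by
  simp only [mixedTerm]
  have hw : 0 < ((Real.pi : ℂ) ^ 2 / z / Ω 0 0).re := by
    rw [Complex.div_ofReal_re]; exact div_pos (pi_sq_div_re_pos hz) (diag_pos hΩ)
  refine Summable.of_norm (((summable_gauss_one hw (v 0)).mul_of_nonneg
    (summable_theta_lhs (schurC_posDef hΩ) hz fun j => v j.succ - Ω 0 j.succ * v 0 / Ω 0 0)
    (fun _ => norm_nonneg _) fun _ => norm_nonneg _).congr fun p => ?_)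
  rw [norm_mul]
  congr 1
  have e : -z * qfC (schurC Ω) (fun j => (p.2 j : ℂ)) + 2 * (Real.pi : ℂ) * Complex.I *
        ∑ j, (p.2 j : ℂ) * (v j.succ - Ω 0 j.succ * (p.1 + v 0) / Ω 0 0) =
      (-z * qfC (schurC Ω) (fun j => (p.2 j : ℂ)) + 2 * (Real.pi : ℂ) * Complex.I *
        ∑ j, (p.2 j : ℂ) * (v j.succ - Ω 0 j.succ * v 0 / Ω 0 0)) +
      ((-2 * Real.pi * ∑ j, (p.2 j : ℝ) * (Ω 0 j.succ * p.1 / Ω 0 0) : ℝ) : ℂ) * Complex.I := by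
    have : ∑ j, (p.2 j : ℂ) * (v j.succ - Ω 0 j.succ * (p.1 + v 0) / Ω 0 0) =
        ∑ j, (p.2 j : ℂ) * (v j.succ - Ω 0 j.succ * v 0 / Ω 0 0) -
          ∑ j, (p.2 j : ℂ) * (Ω 0 j.succ * p.1 / Ω 0 0) := by
      rw [← Finset.sum_sub_distrib]
      exact Finset.sum_congr rfl fun j _ => by ring
    rw [this]
    push_cast
    ring
  rw [e, Complex.exp_add (_ + _), norm_mul, Complex.norm_exp_ofReal_mul_I, mul_one]

lemma theta_identity (d : ℕ) (Ω : Matrix (Fin d) (Fin d) ℝ) (hΩ : Ω.PosDef)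
    (z : ℂ) (hz : 0 < z.re) (v : Fin d → ℂ) :
    ∑' m : Fin d → ℤ, Complex.exp (-z * qfC Ω (fun j => (m j : ℂ)) +
        2 * (Real.pi : ℂ) * Complex.I * ∑ j, (m j : ℂ) * v j) =
      (z / (Real.pi : ℂ)) ^ (-(d : ℂ) / 2) * ((Ω.det : ℂ)) ^ (-(1 : ℂ) / 2) *
        ∑' n : Fin d → ℤ,
          Complex.exp (-((Real.pi : ℂ) ^ 2 / z) * qfC Ω⁻¹ (fun j => (n j : ℂ) + v j)) := by
  induction d with
  | zero => simp [qfC]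
  | succ d ih =>
    have ha := diag_pos hΩ
    have ha0 : (Ω 0 0 : ℂ) ≠ 0 := by exact_mod_cast ha.ne'
    rw [tsum_fin_succ' (summable_theta_lhs hΩ hz v),
      tsum_fin_succ (summable_gauss_shift hΩ.inv (pi_sq_div_re_pos hz) v)]
    have hcons : ∀ (m₀ : ℤ) (m' : Fin d → ℤ),
        (fun j => (((Fin.cons m₀ m' : Fin (d + 1) → ℤ) j : ℤ) : ℂ)) =
          Fin.cons (m₀ : ℂ) fun j => (m' j : ℂ) := by
      intro m₀ m'
      funext j
      refine Fin.cases ?_ (fun j => ?_) j <;> simp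
    have hin : ∀ m' : Fin d → ℤ,
        ∑' m₀ : ℤ, Complex.exp (-z * qfC Ω (fun j => ((Fin.cons m₀ m' : Fin (d + 1) → ℤ) j : ℂ)) +
          2 * (Real.pi : ℂ) * Complex.I *
            ∑ j, ((Fin.cons m₀ m' : Fin (d + 1) → ℤ) j : ℂ) * v j) =
        1 / ((Ω 0 0 : ℂ) * (z / Real.pi)) ^ (1 / 2 : ℂ) * 
          ∑' n : ℤ, mixedTerm Ω z v n m' := by
      intro m'
      simp only [mixedTerm]
      have h := congrArg (Complex.exp (-z * qfC (schurC Ω) (fun j => (m' j : ℂ)) +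
        2 * (Real.pi : ℂ) * Complex.I * ∑ j, (m' j : ℂ) * v j.succ) * ·)
        (poisson_one hz ha (∑ j, (Ω 0 j.succ : ℂ) * m' j) (v 0))
      simp only [← tsum_mul_left] at h
      rw [← tsum_mul_left]
      convert h using 1
      · refine tsum_congr fun m₀ => ?_
        rw [← Complex.exp_add, hcons, qfC_cons hΩ, Fin.sum_univ_succ]
        simp only [Fin.cons_zero, Fin.cons_succ]
        congr 1; ring
      · refine tsum_congr fun n => ?_
        have : ∑ j, (m' j : ℂ) * (v j.succ - Ω 0 j.succ * (n + v 0) / Ω 0 0) =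
            ∑ j, (m' j : ℂ) * v j.succ - (∑ j, (Ω 0 j.succ : ℂ) * m' j) * (n + v 0) / Ω 0 0 := by
          rw [Finset.sum_mul, Finset.sum_div, ← Finset.sum_sub_distrib]
          exact Finset.sum_congr rfl fun j _ => by ring
        have aux : ∀ X Y G C B : ℂ, B = X + Y → C * (G * Complex.exp B) =
            Complex.exp X * (C * (G * Complex.exp Y)) := by
          rintro X Y G C B rfl
          rw [Complex.exp_add]; ring
        exact aux _ _ _ _ _ (by rw [this]; ring)
    simp only [hin]
    rw [tsum_mul_left]
    have hcomm : ∑' (m' : Fin d → ℤ) (n : ℤ), mixedTerm Ω z v n m' =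
        ∑' (n : ℤ) (m' : Fin d → ℤ), mixedTerm Ω z v n m' :=
      Summable.tsum_comm (f := mixedTerm Ω z v) (summable_mixed hΩ hz v)
    rw [hcomm]
    simp only [mixedTerm, tsum_mul_left, ih _ (schurC_posDef hΩ)]
    rw [det_schurC hΩ, ← theta_const hz ha (schurC_posDef hΩ).det_pos, mul_assoc]
    congr 1
    rw [← tsum_mul_left]
    refine tsum_congr fun n => ?_
    rw [mul_left_comm]
    congr 1
    rw [← tsum_mul_left]
    refine tsum_congr fun n' => ?_
    rw [← Complex.exp_add, qfC_inv_cons hΩ]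
    simp only [Fin.cons_zero, Fin.cons_succ]
    congr 1
    have : (fun j => (n' j : ℂ) + (v j.succ - Ω 0 j.succ * (n + v 0) / Ω 0 0)) =
        fun j => (n' j : ℂ) + v j.succ - Ω 0 j.succ * (n + v 0) / Ω 0 0 := by
      funext j; ring
    rw [this]
    ring

/-- Theta transformation formula (Corollary `thetasums1a`): for a real symmetric positive
definite matrix `Ω`, `Re z > 0` and `v ∈ ℂ^d`,
`Σ_{m ∈ ℤ^d} exp(−z·Ω[m] + 2πi⟨m,v⟩)
  = (z/π)^{−d/2} (det Ω)^{−1/2} Σ_{n ∈ ℤ^d} exp(−(π²/z)·Ω⁻¹[n+v])`,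
both series converging absolutely. -/
theorem theta_transformation (d : ℕ) (Ω : Matrix (Fin d) (Fin d) ℝ) (hΩ : Ω.PosDef)
    (z : ℂ) (hz : 0 < z.re) (v : Fin d → ℂ) :
    Summable (fun m : Fin d → ℤ =>
      ‖Complex.exp (-z * qfC Ω (fun j => (m j : ℂ)) +
        2 * (Real.pi : ℂ) * Complex.I * ∑ j, (m j : ℂ) * v j)‖) ∧
    Summable (fun n : Fin d → ℤ =>
      ‖Complex.exp (-((Real.pi : ℂ) ^ 2 / z) * qfC Ω⁻¹ (fun j => (n j : ℂ) + v j))‖) ∧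
    ∑' m : Fin d → ℤ, Complex.exp (-z * qfC Ω (fun j => (m j : ℂ)) +
        2 * (Real.pi : ℂ) * Complex.I * ∑ j, (m j : ℂ) * v j) =
      (z / (Real.pi : ℂ)) ^ (-(d : ℂ) / 2) * ((Ω.det : ℂ)) ^ (-(1 : ℂ) / 2) *
        ∑' n : Fin d → ℤ,
          Complex.exp (-((Real.pi : ℂ) ^ 2 / z) * qfC Ω⁻¹ (fun j => (n j : ℂ) + v j)) := by
  exact ⟨summable_theta_lhs hΩ hz v, summable_gauss_shift hΩ.inv (pi_sq_div_re_pos hz) v,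
    theta_identity d Ω hΩ z hz v⟩
end
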